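/- Let r ≥ 1 and let ι : ℤ^r → ℂ be an additive group homomorphism whose values x_j = ι(e_j) on the standard basis vectors are linearly independent over ℚ and span ℂ over ℝ. Then there is an isomorphism of abelian groups H^{r−1}(ℤ^r, O(ℂ)^×) ≅ (ℂ / ι(ℤ^r)) × ℤ, where ℂ / ι(ℤ^r) is the quotient of the additive group ℂ by the image of ι. -/

import Mathlib

/-!
Write `x_j = ι(e_j)`, let `t_j` be translation by `x_j`, and let `M` be the group of
nowhere-vanishing entire functions. Since the `x_j` span `ℂ` over `ℝ`, there are at least two of them.

*Reduction to coinvariants.* Every element of `M` is `exp g` (`exists_entire_log`), and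
`f (z + x₀) - f z = g z` is always solvable by Guichard's theorem (`guichard`), so `t₀ - 1` is
surjective on `M`. Hence `H^{r-1}(ℤ^r, M)` is the top cohomology of the remaining `ℤ^{r-1}` acting
on the `t₀`-fixed elements, i.e. the quotient of `M^{t₀}` by the images of `t_j - 1`, `j ≥ 1`
(`top_cohomology_presentation`). This is obtained by identifying group cohomology with
`Ext(R, M)` and killing one generator at a time with the short exact sequences
`0 → R[ℤ^{r-k}] →[t_k - 1] R[ℤ^{r-k}] → R[ℤ^{r-k-1}] → 0`.

*Computation of the coinvariants.* The elements of `M^{t₀}` are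
`exp (h (z / x₀) + 2πi k z / x₀)` with `h` entire of period `1` and `k ∈ ℤ`. The invariant
`(x₀ / 2πi · mean h, k) ∈ ℂ / ι(ℤ^r) × ℤ` is well defined and kills the images of `t_j - 1`.
Conversely, some `x_j / x₀` is not real, so a function `h` of mean zero is a difference
`f (z + x_j / x₀) - f z` with `f` periodic: no small divisors occur when dividing the Fourier
coefficients of `h` by `exp (2πi m x_j / x₀) - 1` (`periodic_difference`). The constants
`2πi v x_j / x₀` come from the coboundaries of `exp (2πi v z / x₀)`. So the invariant is an
isomorphism from the coinvariants (`expHom_mem_iff`).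
-/

open Complex

/-- The multiplicative abelian group `O(ℂ)^×` of nowhere-vanishing entire functions. -/
def EntireUnits : Type := {f : ℂ → ℂ // Differentiable ℂ f ∧ ∀ z, f z ≠ 0}

noncomputable instance : CommGroup EntireUnits where
  mul f g := ⟨fun z => f.1 z * g.1 z, f.2.1.mul g.2.1,
    fun z => mul_ne_zero (f.2.2 z) (g.2.2 z)⟩
  one := ⟨fun _ => 1, differentiable_const 1, fun _ => one_ne_zero⟩
  inv f := ⟨fun z => (f.1 z)⁻¹, f.2.1.inv f.2.2, fun z => inv_ne_zero (f.2.2 z)⟩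
  mul_assoc f g h := Subtype.ext (funext fun z => mul_assoc _ _ _)
  one_mul f := Subtype.ext (funext fun z => one_mul _)
  mul_one f := Subtype.ext (funext fun z => mul_one _)
  inv_mul_cancel f := Subtype.ext (funext fun z => inv_mul_cancel₀ (f.2.2 z))
  mul_comm f g := Subtype.ext (funext fun z => mul_comm _ _)

/-- Translation of a nowhere-vanishing entire function by `c ∈ ℂ`. -/
def EntireUnits.translate (c : ℂ) : EntireUnits →* EntireUnits where
  toFun f := ⟨fun z => f.1 (z + c), f.2.1.comp (differentiable_id.add_const c),
    fun z => f.2.2 (z + c)⟩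
  map_one' := rfl
  map_mul' f g := rfl

/-- The action of `ℤ^r` on `O(ℂ)^×` given by `(n · f)(z) = f(z + ι(n))`, packaged as a
representation over `ℤ` of the (multiplicative avatar of the) group `ℤ^r` on the additive
avatar of `O(ℂ)^×`. -/
noncomputable def entireRep (r : ℕ) (ι : (Fin r → ℤ) →+ ℂ) :
    Representation ℤ (Multiplicative (Fin r → ℤ)) (Additive EntireUnits) where
  toFun n := (MonoidHom.toAdditive (EntireUnits.translate (ι n.toAdd))).toIntLinearMap
  map_one' := by
    apply LinearMap.ext
    intro f
    exact Subtype.ext (funext fun z => by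
      show f.toMul.1 (z + ι (Multiplicative.toAdd 1)) = f.toMul.1 z
      simp)
  map_mul' m n := by
    apply LinearMap.ext
    intro f
    exact Subtype.ext (funext fun z => by
      show f.toMul.1 (z + ι (m * n).toAdd) = f.toMul.1 (z + ι m.toAdd + ι n.toAdd)
      have h : ι (m * n).toAdd = ι m.toAdd + ι n.toAdd := by rw [toAdd_mul, map_add]
      rw [h, add_assoc])

/-- `H^i(ℤ^r, O(ℂ)^×)`, the group cohomology of `ℤ^r` with coefficients in the
nowhere-vanishing entire functions, acted on by translation through `ι`. -/
noncomputable def entireCohomology (r : ℕ) (ι : (Fin r → ℤ) →+ ℂ) (i : ℕ) :=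
  groupCohomology (Rep.of (entireRep r ι)) i

/-! ### Top cohomology of `ℤ^r` as coinvariants -/

section Homological

open CategoryTheory CategoryTheory.Abelian Limits

instance repHasExt {R G : Type} [CommRing R] [Group G] : HasExt.{0} (Rep.{0} R G) :=
  hasExt_of_enoughProjectives _

/-- Two quotients of the same group with the same kernel are isomorphic. -/
lemma nonempty_addEquiv_of_surjective {P A B : Type*} [AddCommGroup P] [AddCommGroup A]
    [AddCommGroup B] (f : P →+ A) (g : P →+ B) (hf : Function.Surjective f)
    (hg : Function.Surjective g) (h : ∀ p, f p = 0 ↔ g p = 0) : Nonempty (A ≃+ B) := by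
  have hk : f.ker = g.ker := by
    ext p
    exact h p
  exact ⟨(QuotientAddGroup.quotientKerEquivOfSurjective f hf).symm.trans
    ((QuotientAddGroup.quotientAddEquivOfEq hk).trans
      (QuotientAddGroup.quotientKerEquivOfSurjective g hg))⟩

/-- In positive degrees group cohomology is `Ext` out of the trivial representation: both are
computed by cocycles on the bar resolution modulo coboundaries. -/
theorem groupCohomology_addEquiv_ext {R G : Type} [CommRing R] [Group G] (M : Rep.{0} R G)
    (n : ℕ) :
    Nonempty (groupCohomology M (n + 1) ≃+ Abelian.Ext (Rep.trivial R G R) M (n + 1)) := by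
  let F := Rep.barResolution R G
  let K := F.complex.linearYonedaObj R M
  let S := K.sc' n (n + 1) (n + 2)
  let e : groupCohomology M (n + 1) ≅ S.moduleCatLeftHomologyData.H :=
    groupCohomologyIso M (n + 1) F ≪≫
      (K.homologyIsoSc' n (n + 1) (n + 2) (by simp) (by simp)) ≪≫ S.moduleCatHomologyIso
  let e' : groupCohomology M (n + 1) ≃+
      (LinearMap.ker S.g.hom ⧸ LinearMap.range S.moduleCatToCycles) := e.toLinearEquiv.toAddEquiv
  let φ : LinearMap.ker S.g.hom →+ Abelian.Ext (Rep.trivial R G R) M (n + 1) :=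
    { toFun := fun f => F.extMk (n := n + 1) (f.1 : F.complex.X (n + 1) ⟶ M) (n + 2) rfl f.2
      map_zero' := F.extMk_zero _ _
      map_add' := fun f g => (F.add_extMk _ _ _ _ f.2 g.2).symm }
  have hφ : Function.Surjective φ := fun x => by
    obtain ⟨f, hf, rfl⟩ := F.extMk_surjective x (n + 2) rfl
    exact ⟨⟨f, hf⟩, rfl⟩
  let ψ : LinearMap.ker S.g.hom →+
      (LinearMap.ker S.g.hom ⧸ LinearMap.range S.moduleCatToCycles) :=
    (Submodule.mkQ (LinearMap.range S.moduleCatToCycles)).toAddMonoidHom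
  obtain ⟨e''⟩ := nonempty_addEquiv_of_surjective ψ φ (Submodule.mkQ_surjective _) hφ (by
    intro f
    have h1 : ψ f = 0 ↔ f ∈ LinearMap.range S.moduleCatToCycles :=
      Submodule.Quotient.mk_eq_zero _
    have h2 : φ f = 0 ↔ _ := F.extMk_eq_zero_iff (n := n + 1) (f.1 : F.complex.X (n + 1) ⟶ M)
      (n + 2) rfl f.2 n rfl
    rw [h1, h2]
    constructor
    · rintro ⟨y, rfl⟩
      exact ⟨y, rfl⟩
    · rintro ⟨y, hy⟩
      exact ⟨y, Subtype.ext hy⟩)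
  exact ⟨e'.trans e''⟩

variable {R : Type} [CommRing R] {G : Type} [CommGroup G]

/-- The permutation representation on `R[X]`, the finitely supported functions on a `G`-set `X`. -/
noncomputable def permRho (R : Type) [CommRing R] (G : Type) [CommGroup G] (X : Type)
    [MulAction G X] :
    Representation R G (X →₀ R) where
  toFun g := Finsupp.lmapDomain R R (fun x => g • x)
  map_one' := by
    refine Finsupp.lhom_ext fun x a => ?_
    simp
  map_mul' g h := by
    refine Finsupp.lhom_ext fun x a => ?_
    simp [mul_smul]

/-- `permRho` as an object of the category of representations. -/
noncomputable abbrev permRep (R : Type) [CommRing R] (G : Type) [CommGroup G] (X : Type)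
    [MulAction G X] : Rep.{0} R G :=
  Rep.of (permRho R G X)

lemma permRho_single {X : Type} [MulAction G X] (g : G) (x : X) (a : R) :
    permRho R G X g (Finsupp.single x a) = Finsupp.single (g • x) a :=
  Finsupp.mapDomain_single

/-- The morphism of permutation representations induced by an equivariant map. -/
noncomputable def permRepMap {X Y : Type} [MulAction G X] [MulAction G Y] (π : X → Y)
    (hπ : ∀ (g : G) x, π (g • x) = g • π x) : permRep R G X ⟶ permRep R G Y :=
  Rep.ofHom ⟨Finsupp.lmapDomain R R π, fun g => by
    refine Finsupp.lhom_ext fun x a => ?_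
    simp only [LinearMap.comp_apply]
    rw [permRho_single, Finsupp.lmapDomain_apply, Finsupp.lmapDomain_apply,
      Finsupp.mapDomain_single, Finsupp.mapDomain_single, permRho_single, hπ]⟩

lemma permRepMap_single {X Y : Type} [MulAction G X] [MulAction G Y] (π : X → Y)
    (hπ : ∀ (g : G) x, π (g • x) = g • π x) (x : X) (a : R) :
    (permRepMap π hπ).hom (Finsupp.single x a) = Finsupp.single (π x) a :=
  Finsupp.mapDomain_single

lemma sub_one_apply (B : Rep.{0} R G) (t : G) (b : B) :
    (B.applyAsHom t - 𝟙 B).hom b = B.ρ t b - b := rfl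

/-- The differences `[tⁿ x] - [x]` lie in the image of `t - 1`. -/
lemma single_zpow_sub_mem {X : Type} [MulAction G X] (t : G) (x : X) (a : R) (n : ℤ) :
    ∃ y : X →₀ R, ((permRep R G X).applyAsHom t - 𝟙 _).hom y =
      (Finsupp.single (t ^ n • x) a - Finsupp.single x a : X →₀ R) := by
  induction n with
  | zero => exact ⟨0, by simp⟩
  | succ n ih =>
    obtain ⟨y, hy⟩ := ih
    refine ⟨y + Finsupp.single (t ^ (n : ℤ) • x) a, ?_⟩
    erw [map_add, hy, sub_one_apply, permRho_single]
    rw [← mul_smul, ← zpow_one_add, add_comm (1 : ℤ)]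
    abel
  | pred n ih =>
    obtain ⟨y, hy⟩ := ih
    refine ⟨y - Finsupp.single (t ^ (-(n : ℤ) - 1) • x) a, ?_⟩
    erw [map_sub, hy, sub_one_apply, permRho_single]
    rw [← mul_smul, ← zpow_one_add]
    rw [show (1 : ℤ) + (-n - 1) = -n by ring]
    abel

universe u in
lemma rep_exact_iff {k H : Type u} [CommRing k] [Group H] (S : ShortComplex (Rep.{u} k H)) :
    S.Exact ↔ ∀ x : S.X₂, S.g.hom x = 0 → ∃ y : S.X₁, S.f.hom y = x := by
  rw [← ShortComplex.exact_map_iff_of_faithful _ (forget₂ (Rep.{u} k H) (ModuleCat.{u} k)),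
    ShortComplex.moduleCat_exact_iff]
  exact Iff.rfl

/-- If `t` acts freely on `X` with quotient `Y` then
`0 → R[X] →[t-1] R[X] → R[Y] → 0` is exact. -/
lemma permRep_shortExact {X Y : Type} [MulAction G X] [MulAction G Y] (π : X → Y)
    (hπ : ∀ (g : G) x, π (g • x) = g • π x) (s : Y → X) (hs : ∀ y, π (s y) = y) (t : G)
    (hts : ∀ x, ∃ n : ℤ, t ^ n • s (π x) = x)
    (htf : ∀ (x : X) (n : ℤ), t ^ n • x = x → n = 0)
    (w : ((permRep R G X).applyAsHom t - 𝟙 _) ≫ permRepMap π hπ = 0) :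
    (ShortComplex.mk _ _ w).ShortExact := by
  refine ShortComplex.ShortExact.mk' ?_ ?_ ?_
  · rw [rep_exact_iff]
    intro (f : X →₀ R) hf
    have key : ∀ f : X →₀ R, ∃ y : X →₀ R, ((permRep R G X).applyAsHom t - 𝟙 _).hom y =
        (f - Finsupp.mapDomain s (Finsupp.mapDomain π f) : X →₀ R) := by
      intro f
      induction f using Finsupp.induction_linear with
      | zero => exact ⟨0, by simp⟩
      | add f g hf hg =>
        obtain ⟨y, hy⟩ := hf
        obtain ⟨z, hz⟩ := hg
        refine ⟨y + z, ?_⟩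
        erw [map_add, hy, hz]
        rw [Finsupp.mapDomain_add, Finsupp.mapDomain_add]
        abel
      | single x a =>
        obtain ⟨n, hn⟩ := hts x
        obtain ⟨y, hy⟩ := single_zpow_sub_mem t (s (π x)) a n
        refine ⟨y, ?_⟩
        rw [hy, hn, Finsupp.mapDomain_single, Finsupp.mapDomain_single]
    obtain ⟨y, hy⟩ := key f
    have hf' : Finsupp.mapDomain π f = 0 := hf
    rw [hf', Finsupp.mapDomain_zero, sub_zero] at hy
    exact ⟨y, hy⟩
  · rw [Rep.mono_iff_injective]
    refine (injective_iff_map_eq_zero _).2 fun (f : X →₀ R) hf => ?_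
    have h1 : Finsupp.mapDomain (fun x => t • x) f = f := sub_eq_zero.1 hf
    have h2 : ∀ x, f (t • x) = f x := fun x => by
      conv_lhs => rw [← h1]
      exact Finsupp.mapDomain_apply (MulAction.injective t) f x
    have h3 : ∀ (n : ℕ) x, f (t ^ n • x) = f x := by
      intro n
      induction n with
      | zero => simp
      | succ n ih => intro x; rw [pow_succ', mul_smul, h2, ih]
    ext x
    by_contra hx
    have hinj : Function.Injective fun n : ℕ => t ^ n • x := by
      intro m n hmn
      have := htf x ((m : ℤ) - n) (by
        rw [sub_eq_add_neg, add_comm, zpow_add, mul_smul, zpow_neg, inv_smul_eq_iff]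
        simpa using hmn)
      omega
    refine (Set.infinite_range_of_injective hinj) (f.support.finite_toSet.subset ?_)
    rintro _ ⟨n, rfl⟩
    simpa [h3] using hx
  · rw [Rep.epi_iff_surjective]
    intro (f : Y →₀ R)
    refine ⟨(Finsupp.mapDomain s f : X →₀ R), ?_⟩
    change Finsupp.mapDomain π (Finsupp.mapDomain s f) = f
    rw [← Finsupp.mapDomain_comp, show π ∘ s = id from funext hs, Finsupp.mapDomain_id]

/-- The operator on `Extⁿ(B, M)` induced by the action of `t` on `B`. -/
noncomputable def extAct (M B : Rep.{0} R G) (n : ℕ) (t : G) :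
    Abelian.Ext B M n →+ Abelian.Ext B M n :=
  (Ext.mk₀ (B.applyAsHom t)).precomp M (zero_add n)

/-- Precomposition with `t - 1` on `B` is the operator `t - 1` on `Ext`. -/
lemma extAct_sub_one (M B : Rep.{0} R G) (n : ℕ) (t : G) (x : Abelian.Ext B M n) :
    (Ext.mk₀ (B.applyAsHom t - 𝟙 B)).comp x (zero_add n) = extAct M B n t x - x := by
  have : Ext.mk₀ (B.applyAsHom t - 𝟙 B) = Ext.mk₀ (B.applyAsHom t) - Ext.mk₀ (𝟙 B) :=
    map_sub (Ext.addEquiv₀ (X := B) (Y := B)).symm _ _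
  rw [this, sub_eq_add_neg, Ext.add_comp, Ext.neg_comp, Ext.mk₀_id_comp, ← sub_eq_add_neg]
  rfl

section Wang

variable {B B' : Rep.{0} R G} {t : G} {p : B ⟶ B'} {w : (B.applyAsHom t - 𝟙 B) ≫ p = 0}
  (hS : (ShortComplex.mk _ _ w).ShortExact) (M : Rep.{0} R G)

/-- The connecting map of the long exact `Ext` sequence of `0 → B →[t-1] B → B' → 0`. -/
noncomputable def wangδ (n : ℕ) : Abelian.Ext B M n →+ Abelian.Ext B' M (n + 1) :=
  hS.extClass.precomp M (add_comm 1 n)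

/-- The connecting map is equivariant. As `G` is commutative, each `g` acts on the whole short exact
sequence by morphisms of representations. -/
lemma wangδ_act (n : ℕ) (g : G) (x : Abelian.Ext B M n) :
    wangδ hS M n (extAct M B n g x) = extAct M B' (n + 1) g (wangδ hS M n x) := by
  have := ShortComplex.ShortExact.extClass_naturality hS hS
    { τ₁ := B.applyAsHom g, τ₂ := B.applyAsHom g, τ₃ := B'.applyAsHom g
      comm₁₂ := Rep.applyAsHom_comm _ g
      comm₂₃ := Rep.applyAsHom_comm p g }
  change hS.extClass.comp ((Ext.mk₀ (B.applyAsHom g)).comp x (zero_add n)) (add_comm 1 n) =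
    (Ext.mk₀ (B'.applyAsHom g)).comp (hS.extClass.comp x (add_comm 1 n)) (zero_add (n + 1))
  rw [← Ext.comp_assoc (a₁₂ := 1) _ _ _ (by lia) (by lia) (by lia),
    ← Ext.comp_assoc (a₁₂ := 1) _ _ _ (by lia) (by lia) (by lia)]
  dsimp only at this
  rw [this]

lemma wangδ_surjective (n : ℕ) (h0 : ∀ x : Abelian.Ext B M (n + 1), x = 0) :
    Function.Surjective (wangδ hS M n) := fun x =>
  Ext.contravariant_sequence_exact₃ hS M x (h0 _) (add_comm 1 n)

lemma wangδ_ker (n : ℕ) (x : Abelian.Ext B M n) :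
    wangδ hS M n x = 0 ↔ ∃ y, extAct M B n t y - y = x := by
  constructor
  · intro h
    obtain ⟨y, hy⟩ := Ext.contravariant_sequence_exact₁ hS M x (add_comm 1 n) h
    exact ⟨y, by rw [← extAct_sub_one]; exact hy⟩
  · rintro ⟨y, rfl⟩
    rw [← extAct_sub_one]
    exact hS.extClass_comp_assoc y (h := add_comm 1 n)

lemma wang_vanish {B B' : Rep.{0} R G} {t : G} {p : B ⟶ B'}
    {w : (B.applyAsHom t - 𝟙 B) ≫ p = 0} (hS : (ShortComplex.mk _ _ w).ShortExact)
    (M : Rep.{0} R G) (n : ℕ) (h0 : ∀ x : Abelian.Ext B M n, x = 0)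
    (h1 : ∀ x : Abelian.Ext B M (n + 1), x = 0) (x : Abelian.Ext B' M (n + 1)) : x = 0 := by
  obtain ⟨y, rfl⟩ := wangδ_surjective hS M n h1 x
  rw [h0 y, map_zero]

end Wang

section Lift

variable {X : Type} [MulAction G X] (x₀ : X)

/-- If `X` is a transitive `G`-set with base point `x₀`, a vector `m` fixed by the stabilizer
of `x₀` extends to a morphism `R[X] ⟶ M` with `[x₀] ↦ m`. -/
noncomputable def permRepLift (σ : X → G) (hσ : ∀ x, σ x • x₀ = x) (M : Rep.{0} R G) (m : M)
    (hm : ∀ g : G, g • x₀ = x₀ → M.ρ g m = m) : permRep R G X ⟶ M :=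
  Rep.ofHom ⟨Finsupp.lsum R fun x => LinearMap.toSpanSingleton R M (M.ρ (σ x) m), fun g => by
    refine Finsupp.lhom_ext fun x a => ?_
    simp only [LinearMap.comp_apply]
    rw [permRho_single, Finsupp.lsum_single, Finsupp.lsum_single,
      LinearMap.toSpanSingleton_apply, LinearMap.toSpanSingleton_apply, map_smul]
    congr 1
    have h := hm ((g * σ x)⁻¹ * σ (g • x)) (by
      rw [mul_smul, hσ, inv_smul_eq_iff, mul_smul, hσ])
    rw [← Module.End.mul_apply, ← map_mul]
    conv_rhs => rw [← h]
    rw [← Module.End.mul_apply, ← map_mul, mul_inv_cancel_left]⟩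

lemma permRepLift_single (σ : X → G) (hσ : ∀ x, σ x • x₀ = x) (M : Rep.{0} R G) (m : M)
    (hm : ∀ g : G, g • x₀ = x₀ → M.ρ g m = m) :
    (permRepLift x₀ σ hσ M m hm).hom (Finsupp.single x₀ 1 : X →₀ R) = m := by
  change Finsupp.lsum R (fun x => LinearMap.toSpanSingleton R M (M.ρ (σ x) m))
    (Finsupp.single x₀ 1) = m
  rw [Finsupp.lsum_single, LinearMap.toSpanSingleton_apply, one_smul, hm _ (hσ x₀)]

lemma hom_single_smul {M : Rep.{0} R G} (f : permRep R G X ⟶ M) (g : G) (x : X) (a : R) :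
    f.hom (Finsupp.single (g • x) a : X →₀ R) = M.ρ g (f.hom (Finsupp.single x a : X →₀ R)) := by
  rw [← permRho_single]
  exact Rep.hom_comm_apply f g (Finsupp.single x a : X →₀ R)

lemma permRep_hom_ext (σ : X → G) (hσ : ∀ x, σ x • x₀ = x) {M : Rep.{0} R G}
    {f f' : permRep R G X ⟶ M}
    (h : f.hom (Finsupp.single x₀ 1 : X →₀ R) = f'.hom (Finsupp.single x₀ 1 : X →₀ R)) :
    f = f' := by
  have key : f.hom.toLinearMap = f'.hom.toLinearMap := by
    refine Finsupp.lhom_ext' fun x => LinearMap.ext_ring ?_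
    change f.hom (Finsupp.single x 1 : X →₀ R) = f'.hom (Finsupp.single x 1 : X →₀ R)
    rw [← hσ x, hom_single_smul, hom_single_smul, h]
  ext v
  exact DFunLike.congr_fun key (Finsupp.single v 1 : X →₀ R)

/-- `R[X]` is projective when `G` acts simply transitively on `X`. -/
lemma permRep_projective (σ : X → G) (hσ : ∀ x, σ x • x₀ = x)
    (hfree : ∀ g : G, g • x₀ = x₀ → g = 1) : Projective (permRep R G X) where
  factors {E F} f e he := by
    rw [Rep.epi_iff_surjective] at he
    obtain ⟨m, hm⟩ := he (f.hom (Finsupp.single x₀ 1 : X →₀ R))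
    have hm1 : ∀ g : G, g • x₀ = x₀ → E.ρ g m = m := fun g hg => by simp [hfree g hg]
    refine ⟨permRepLift x₀ σ hσ E m hm1, permRep_hom_ext x₀ σ hσ ?_⟩
    change e.hom ((permRepLift x₀ σ hσ E m hm1).hom (Finsupp.single x₀ 1 : X →₀ R)) = _
    rw [permRepLift_single, hm]

end Lift

section Chain

variable {r : ℕ}

/-- The `ℤ^r`-set of integer vectors indexed by the coordinates `j ≥ k`, on which `ℤ^r` acts by
translation. -/
def Coord (r k : ℕ) : Type := {j : Fin r // k ≤ j.1} → ℤ

instance (k : ℕ) : MulAction (Multiplicative (Fin r → ℤ)) (Coord r k) where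
  smul n x := fun j => n.toAdd j.1 + x j
  one_smul x := funext fun j => zero_add (x j)
  mul_smul m n x := funext fun j => add_assoc (m.toAdd j.1) (n.toAdd j.1) (x j)

lemma Coord.smul_apply {k : ℕ} (n : Multiplicative (Fin r → ℤ)) (x : Coord r k)
    (j : {j : Fin r // k ≤ j.1}) :
    (n • x) j = n.toAdd j.1 + x j := rfl

/-- Forgetting the coordinate `k`, the quotient map for translation in that coordinate. -/
def Coord.proj (k : ℕ) (x : Coord r k) : Coord r (k + 1) := fun j => x ⟨j.1, by have := j.2; lia⟩

/-- Extend by zero in the coordinate `k`. -/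
def Coord.fill (k : ℕ) (y : Coord r (k + 1)) : Coord r k :=
  fun j => if h : k + 1 ≤ j.1.1 then y ⟨j.1, h⟩ else 0

/-- Extend by zero to a vector of `ℤ^r`. -/
def Coord.toGrp (k : ℕ) (x : Coord r k) : Multiplicative (Fin r → ℤ) :=
  Multiplicative.ofAdd fun j => if h : k ≤ j.1 then x ⟨j, h⟩ else 0

/-- The origin. -/
def Coord.origin (r k : ℕ) : Coord r k := fun _ => 0

lemma Coord.toGrp_smul (k : ℕ) (x : Coord r k) : x.toGrp k • Coord.origin r k = x := by
  funext j
  simp [smul_apply, toGrp, origin, j.2]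

lemma Coord.proj_smul (k : ℕ) (n : Multiplicative (Fin r → ℤ)) (x : Coord r k) :
    (n • x).proj k = n • x.proj k := rfl

/-- The `j`-th standard generator of `ℤ^r`, written multiplicatively. -/
def gen (j : Fin r) : Multiplicative (Fin r → ℤ) := Multiplicative.ofAdd (Pi.single j 1)

lemma gen_zpow (j : Fin r) (n : ℤ) : gen j ^ n = Multiplicative.ofAdd (Pi.single j n) := by
  rw [gen, ← ofAdd_zsmul]
  congr 1
  ext i
  by_cases h : i = j
  · subst h; simp
  · simp [h]

/-- The representation `R[Coord r k]`: free of rank one over the group ring for `k = 0`, trivial of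
rank one for `k = r`. -/
noncomputable abbrev coordRep (R : Type) [CommRing R] (r k : ℕ) :
    Rep.{0} R (Multiplicative (Fin r → ℤ)) :=
  permRep R (Multiplicative (Fin r → ℤ)) (Coord r k)

lemma coord_comp_zero (R : Type) [CommRing R] (k : Fin r) :
    ((coordRep R r k).applyAsHom (gen k) - 𝟙 _) ≫
      permRepMap (Coord.proj (r := r) k) (Coord.proj_smul k.1) = 0 := by
  apply permRep_hom_ext (Coord.origin r k) (Coord.toGrp k.1) (Coord.toGrp_smul k.1)
  change (permRepMap (Coord.proj k.1) (Coord.proj_smul k.1)).hom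
    (permRho R _ _ (gen k) (Finsupp.single _ 1) - Finsupp.single _ 1 : Coord r k →₀ R) = 0
  rw [permRho_single, map_sub]
  erw [permRepMap_single, permRepMap_single]
  rw [sub_eq_zero]
  congr 1
  funext j
  have hj : j.1 ≠ k := fun h => by have := j.2; rw [h] at this; lia
  simp [Coord.proj, Coord.smul_apply, gen, hj]

/-- Killing the `k`-th generator: `0 → R[Coord r k] →[t_k - 1] R[Coord r k] → R[Coord r (k+1)] → 0`
is exact. -/
lemma coord_shortExact (R : Type) [CommRing R] (k : Fin r) :
    (ShortComplex.mk _ _ (coord_comp_zero R k)).ShortExact := by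
  refine permRep_shortExact _ _ (Coord.fill k.1) ?_ _ ?_ ?_ _
  · intro y
    funext j
    simp only [Coord.proj, Coord.fill]
    rw [dif_pos j.2]
  · intro x
    refine ⟨x ⟨k, le_rfl⟩, ?_⟩
    rw [gen_zpow]
    funext j
    rw [Coord.smul_apply]
    obtain ⟨j, hj⟩ := j
    by_cases h : j = k
    · subst h; simp [Coord.fill]
    · have : k.1 + 1 ≤ j.1 := by
        have : k.1 ≠ j.1 := fun h' => h (Fin.ext h'.symm)
        lia
      simp [Coord.fill, Coord.proj, h, this]
  · intro x n h
    rw [gen_zpow] at h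
    simpa [Coord.smul_apply] using congrFun h ⟨k, le_rfl⟩

lemma coord_free (g : Multiplicative (Fin r → ℤ))
    (hg : g • Coord.origin r 0 = Coord.origin r 0) : g = 1 := by
  refine Multiplicative.toAdd.injective (funext fun j => ?_)
  simpa [Coord.smul_apply, Coord.origin] using congrFun hg ⟨j, Nat.zero_le _⟩

lemma coordRep_zero_projective (R : Type) [CommRing R] (r : ℕ) : Projective (coordRep R r 0) :=
  permRep_projective (Coord.origin r 0) (Coord.toGrp 0) (Coord.toGrp_smul 0) coord_free

variable (M : Rep.{0} R (Multiplicative (Fin r → ℤ)))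

/-- `Ext^n(R[Coord r (k+1)], M) = 0` for `n > k` as soon as `t₀ - 1` is onto on `M`. -/
lemma coord_ext_vanish (h0 : 0 < r)
    (hM : ∀ m : M, ∃ m' : M, M.ρ (gen ⟨0, h0⟩) m' - m' = m) (k : ℕ) (hk : k < r) :
    ∀ (n : ℕ) (x : Abelian.Ext (coordRep R r (k + 1)) M (k + n + 1)), x = 0 := by
  induction k with
  | zero =>
    have hP := coordRep_zero_projective R r
    intro n x
    obtain ⟨y, rfl⟩ := wangδ_surjective (coord_shortExact R ⟨0, h0⟩) M (0 + n)
      (fun y => Ext.eq_zero_of_projective y) x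
    rw [wangδ_ker]
    cases n with
    | succ n => exact ⟨0, by rw [map_zero, sub_zero, Ext.eq_zero_of_projective y]⟩
    | zero =>
      obtain ⟨f, rfl⟩ := (Ext.mk₀_bijective _ _).2 y
      obtain ⟨m', hm'⟩ := hM (f.hom (Finsupp.single (Coord.origin r 0) 1 : Coord r 0 →₀ R))
      let f' : coordRep R r 0 ⟶ M := permRepLift (Coord.origin r 0) (Coord.toGrp 0)
        (Coord.toGrp_smul 0) M m' fun g hg => by
          rw [coord_free g hg, map_one, Module.End.one_apply]
      refine ⟨Ext.mk₀ f', ?_⟩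
      rw [← extAct_sub_one, Ext.mk₀_comp_mk₀]
      congr 1
      apply permRep_hom_ext (Coord.origin r 0) (Coord.toGrp 0) (Coord.toGrp_smul 0)
      rw [← hm']
      change f'.hom (permRho R _ _ (gen ⟨0, h0⟩) (Finsupp.single _ 1) -
        Finsupp.single _ 1 : Coord r 0 →₀ R) = _
      rw [permRho_single]
      erw [map_sub, hom_single_smul, permRepLift_single]
  | succ k ih =>
    intro n x
    exact wang_vanish (coord_shortExact R ⟨k + 1, hk⟩) M (k + 1 + n)
      (fun y => by
        have h := ih (by lia) n
        rw [show k + n + 1 = k + 1 + n by lia] at h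
        exact h y)
      (fun y => by
        have h := ih (by lia) (n + 1)
        rw [show k + (n + 1) + 1 = k + 1 + n + 1 by lia] at h
        exact h y) x

/-- The subgroup generated by the images of `τ j - 1` for `1 ≤ j ≤ k`. -/
def augSub {N : Type} [AddCommGroup N] (τ : Fin r → N →+ N) (k : ℕ) : AddSubgroup N :=
  ⨆ (j : Fin r) (_ : 1 ≤ j.1 ∧ j.1 ≤ k), (τ j - AddMonoidHom.id N).range

lemma augSub_succ {N : Type} [AddCommGroup N] (τ : Fin r → N →+ N) (k : ℕ) (hk : k + 1 < r) :
    augSub τ (k + 1) = augSub τ k ⊔ (τ ⟨k + 1, hk⟩ - AddMonoidHom.id N).range := by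
  apply le_antisymm
  · refine iSup₂_le fun j hj => ?_
    by_cases h : j.1 ≤ k
    · exact le_sup_of_le_left (le_iSup₂_of_le j ⟨hj.1, h⟩ le_rfl)
    · have : j = ⟨k + 1, hk⟩ := Fin.ext (by change j.1 = k + 1; lia)
      subst this
      exact le_sup_right
  · refine sup_le (iSup₂_le fun j hj => le_iSup₂_of_le j ⟨hj.1, by lia⟩ le_rfl) ?_
    exact le_iSup₂_of_le (⟨k + 1, hk⟩ : Fin r) ⟨by simp, le_rfl⟩ le_rfl

/-- Iterating the connecting maps presents `Ext^k(R[Coord r (k+1)], M)` as the quotient of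
`N ≅ Hom(R[Coord r 1], M)` by the images of `τ j - 1` for `1 ≤ j ≤ k`. -/
lemma coord_ext_presentation (h0 : 0 < r)
    (hM : ∀ m : M, ∃ m' : M, M.ρ (gen ⟨0, h0⟩) m' - m' = m)
    {N : Type} [AddCommGroup N] (τ : Fin r → N →+ N)
    (e : N →+ Abelian.Ext (coordRep R r 1) M 0) (he : Function.Bijective e)
    (heτ : ∀ j x, e (τ j x) = extAct M _ 0 (gen j) (e x)) (k : ℕ) (hk : k < r) :
    ∃ Φ : N →+ Abelian.Ext (coordRep R r (k + 1)) M k, Function.Surjective Φ ∧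
      (∀ j x, Φ (τ j x) = extAct M _ k (gen j) (Φ x)) ∧ ∀ x, Φ x = 0 ↔ x ∈ augSub τ k := by
  induction k with
  | zero =>
    refine ⟨e, he.2, heτ, fun x => ?_⟩
    have : augSub τ 0 = ⊥ := by
      refine le_bot_iff.1 (iSup₂_le fun j hj => ?_)
      lia
    rw [this, AddSubgroup.mem_bot, map_eq_zero_iff e he.1]
  | succ k ih =>
    obtain ⟨Φ, hΦ, hΦτ, hΦk⟩ := ih (by lia)
    have hS := coord_shortExact R (⟨k + 1, hk⟩ : Fin r)
    refine ⟨(wangδ hS M k).comp Φ, ?_, fun j x => ?_, fun x => ?_⟩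
    · exact (wangδ_surjective hS M k (coord_ext_vanish M h0 hM k (by lia) 0)).comp hΦ
    · change wangδ hS M k (Φ (τ j x)) = _
      rw [hΦτ, wangδ_act]
      rfl
    · change wangδ hS M k (Φ x) = 0 ↔ _
      rw [wangδ_ker, augSub_succ τ k hk, AddSubgroup.mem_sup]
      constructor
      · rintro ⟨y, hy⟩
        obtain ⟨y, rfl⟩ := hΦ y
        rw [← hΦτ, ← map_sub] at hy
        refine ⟨x - (τ ⟨k + 1, hk⟩ y - y), (hΦk _).1 ?_, _, ⟨y, rfl⟩, ?_⟩
        · rw [map_sub, hy, sub_self]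
        · exact sub_add_cancel _ _
      · rintro ⟨u, hu, _, ⟨y, rfl⟩, rfl⟩
        refine ⟨Φ y, ?_⟩
        rw [map_add, (hΦk u).2 hu, zero_add, ← hΦτ, ← map_sub]
        rfl

end Chain

section Top

/-- The vectors of `M` fixed by `t`. -/
def fixedSub (M : Rep.{0} R G) (t : G) : AddSubgroup M where
  carrier := {m | M.ρ t m = m}
  zero_mem' := map_zero _
  add_mem' {a b} ha hb := by
    change M.ρ t (a + b) = a + b
    rw [map_add, show M.ρ t a = a from ha, show M.ρ t b = b from hb]
  neg_mem' {a} ha := by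
    change M.ρ t (-a) = -a
    rw [map_neg, show M.ρ t a = a from ha]

/-- The action of `g` on the vectors fixed by `t`. -/
def fixedAct (M : Rep.{0} R G) (t g : G) : fixedSub M t →+ fixedSub M t where
  toFun m := ⟨M.ρ g m, by
    change M.ρ t (M.ρ g m) = M.ρ g m
    rw [← Module.End.mul_apply, ← map_mul, mul_comm, map_mul, Module.End.mul_apply,
      show M.ρ t m = m from m.2]⟩
  map_zero' := Subtype.ext (map_zero _)
  map_add' a b := Subtype.ext (map_add (M.ρ g) a.1 b.1)

lemma ext_addEquiv_of_iso {B B' : Rep.{0} R G} (i : B ≅ B') (M : Rep.{0} R G) (n : ℕ) :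
    Nonempty (Abelian.Ext B M n ≃+ Abelian.Ext B' M n) := by
  refine ⟨{ (Ext.mk₀ i.inv).precomp M (zero_add n) with
    invFun := (Ext.mk₀ i.hom).precomp M (zero_add n)
    left_inv := fun x => ?_
    right_inv := fun x => ?_ }⟩
  · change (Ext.mk₀ i.hom).comp ((Ext.mk₀ i.inv).comp x (zero_add n)) (zero_add n) = x
    rw [Ext.mk₀_comp_mk₀_assoc, i.hom_inv_id, Ext.mk₀_id_comp]
  · change (Ext.mk₀ i.inv).comp ((Ext.mk₀ i.hom).comp x (zero_add n)) (zero_add n) = x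
    rw [Ext.mk₀_comp_mk₀_assoc, i.inv_hom_id, Ext.mk₀_id_comp]

lemma permRep_iso_trivial {X : Type} [MulAction G X] [Unique X] :
    Nonempty (permRep R G X ≅ Rep.trivial R G R) := by
  refine ⟨Rep.mkIso (Representation.Equiv.mk (Finsupp.uniqueLinearEquiv R R default) fun g => ?_)⟩
  refine Finsupp.lhom_ext fun x a => ?_
  change Finsupp.uniqueLinearEquiv R R default (permRho R G X g (Finsupp.single x a)) =
    Finsupp.uniqueLinearEquiv R R default (Finsupp.single x a)
  rw [permRho_single, Subsingleton.elim (g • x) x]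

variable {n : ℕ} (M : Rep.{0} R (Multiplicative (Fin (n + 2) → ℤ)))

/-- The stabilizer of the origin of `Coord (n+2) 1` is generated by `gen 0`. -/
lemma gen_zero_of_smul_origin (g : Multiplicative (Fin (n + 2) → ℤ))
    (hg : g • Coord.origin (n + 2) 1 = Coord.origin (n + 2) 1) : g = gen 0 ^ (g.toAdd 0) := by
  rw [gen_zpow]
  refine Multiplicative.toAdd.injective (funext fun j => ?_)
  by_cases h : j = 0
  · subst h; simp
  · have hj : 1 ≤ j.1 := Nat.one_le_iff_ne_zero.2 fun h' => h (Fin.ext h')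
    have := congrFun hg ⟨j, hj⟩
    simpa [Coord.smul_apply, Coord.origin, h] using this

lemma fixed_zpow (m : fixedSub M (gen 0)) (a : ℤ) : M.ρ (gen 0 ^ a) m = m := by
  have h : M.ρ (gen 0) m = m := m.2
  induction a with
  | zero => simp
  | succ a ih => rw [zpow_add_one, map_mul, Module.End.mul_apply, h, ih]
  | pred a ih =>
    conv_lhs => rw [← h]
    rw [← Module.End.mul_apply, ← map_mul, ← zpow_add_one, sub_add_cancel, ih]

/-- `Hom(R[Coord r 1], M)` is the group of vectors fixed by the generator of coordinate `0`. -/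
noncomputable def fixedToHom : fixedSub M (gen 0) →+ (coordRep R (n + 2) 1 ⟶ M) where
  toFun m := permRepLift (Coord.origin (n + 2) 1) (Coord.toGrp 1) (Coord.toGrp_smul 1) M m
    fun g hg => by rw [gen_zero_of_smul_origin g hg, fixed_zpow]
  map_zero' := by
    apply permRep_hom_ext (Coord.origin (n + 2) 1) (Coord.toGrp 1) (Coord.toGrp_smul 1)
    rw [permRepLift_single]
    rfl
  map_add' a b := by
    apply permRep_hom_ext (Coord.origin (n + 2) 1) (Coord.toGrp 1) (Coord.toGrp_smul 1)
    rw [permRepLift_single]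
    exact (congrArg₂ (· + ·) (permRepLift_single _ _ (Coord.toGrp_smul 1) M a.1 fun g hg => by
      rw [gen_zero_of_smul_origin g hg, fixed_zpow])
      (permRepLift_single _ _ (Coord.toGrp_smul 1) M b.1 fun g hg => by
        rw [gen_zero_of_smul_origin g hg, fixed_zpow])).symm

lemma fixedToHom_single (m : fixedSub M (gen 0)) : (fixedToHom M m).hom
    (Finsupp.single (Coord.origin (n + 2) 1) 1 : Coord (n + 2) 1 →₀ R) = m :=
  permRepLift_single _ _ (Coord.toGrp_smul 1) M m.1 fun g hg => by
    rw [gen_zero_of_smul_origin g hg, fixed_zpow]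

lemma fixedToHom_bijective : Function.Bijective (fixedToHom M) := by
  constructor
  · intro a b h
    apply Subtype.ext
    rw [← fixedToHom_single, h, fixedToHom_single]
  · intro f
    refine ⟨⟨f.hom (Finsupp.single (Coord.origin (n + 2) 1) 1 : Coord (n + 2) 1 →₀ R), ?_⟩, ?_⟩
    · change M.ρ _ _ = _
      rw [← hom_single_smul]
      congr 2
      funext j
      have hj : j.1 ≠ 0 := fun h => by have := j.2; rw [h] at this; simp at this
      simp [Coord.smul_apply, gen, hj]
    · apply permRep_hom_ext (Coord.origin (n + 2) 1) (Coord.toGrp 1) (Coord.toGrp_smul 1)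
      rw [fixedToHom_single]

/-- If `t₀ - 1` is onto on `M`, then `H^{r-1}(ℤ^r, M)` is the quotient of the `t₀`-fixed vectors
by the images of the other `t_j - 1`. -/
theorem top_cohomology_presentation
    (hM : ∀ m : M, ∃ m' : M, M.ρ (gen 0) m' - m' = m) :
    ∃ Φ : fixedSub M (gen 0) →+ groupCohomology M (n + 1), Function.Surjective Φ ∧
      ∀ x, Φ x = 0 ↔ x ∈ augSub (fun j => fixedAct M (gen 0) (gen j)) (n + 1) := by
  obtain ⟨Φ, hΦ, -, hk⟩ := coord_ext_presentation M (Nat.succ_pos _) hM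
    (fun j => fixedAct M (gen 0) (gen j))
    ((Ext.addEquiv₀ (X := coordRep R (n + 2) 1) (Y := M)).symm.toAddMonoidHom.comp (fixedToHom M))
    ((Ext.addEquiv₀ (X := coordRep R (n + 2) 1) (Y := M)).symm.bijective.comp
      (fixedToHom_bijective M))
    (fun j x => by
      change Ext.mk₀ (fixedToHom M _) = (Ext.mk₀ _).comp (Ext.mk₀ (fixedToHom M x)) (zero_add 0)
      rw [Ext.mk₀_comp_mk₀]
      congr 1
      apply permRep_hom_ext (Coord.origin (n + 2) 1) (Coord.toGrp 1) (Coord.toGrp_smul 1)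
      rw [fixedToHom_single]
      change M.ρ (gen j) x = (fixedToHom M x).hom (permRho R _ _ (gen j) (Finsupp.single _ 1) :
        Coord (n + 2) 1 →₀ R)
      rw [permRho_single, hom_single_smul, fixedToHom_single]) (n + 1) (Nat.lt_succ_self _)
  have : IsEmpty {j : Fin (n + 2) // n + 1 + 1 ≤ j.1} :=
    ⟨fun j => by have := j.1.2; have := j.2; lia⟩
  let _ : Unique (Coord (n + 2) (n + 1 + 1)) := Pi.uniqueOfIsEmpty _
  obtain ⟨i⟩ := permRep_iso_trivial (R := R) (G := Multiplicative (Fin (n + 2) → ℤ))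
    (X := Coord (n + 2) (n + 1 + 1))
  obtain ⟨e₁⟩ := ext_addEquiv_of_iso i M (n + 1)
  obtain ⟨e₂⟩ := groupCohomology_addEquiv_ext M n
  refine ⟨(e₁.trans e₂.symm).toAddMonoidHom.comp Φ,
    (e₁.trans e₂.symm).surjective.comp hΦ, fun x => ?_⟩
  rw [← hk]
  exact map_eq_zero_iff _ (e₁.trans e₂.symm).injective

end Top
end Homological

/-! ### Difference equations for entire functions -/

section Analysis

open Real in
/-- On the circles `‖w‖ = (2n+1)π`, which avoid the zeros `2πiℤ` of `exp w - 1`, that function is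
bounded below independently of `n`. -/
lemma norm_exp_sub_one_ge (n : ℕ) (w : ℂ) (hw : ‖w‖ = (2 * n + 1) * π) :
    1 / 2 ≤ ‖Complex.exp w - 1‖ := by
  have hre : ‖Complex.exp w‖ = Real.exp w.re := Complex.norm_exp w
  have he : (2 : ℝ) ≤ Real.exp 1 := by
    have := Real.add_one_le_exp (1 : ℝ); linarith
  rcases le_total 1 w.re with h | h
  · have h1 : Real.exp 1 ≤ Real.exp w.re := Real.exp_le_exp.2 h
    have h2 := norm_sub_norm_le (Complex.exp w) 1
    rw [norm_one, hre] at h2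
    linarith
  rcases le_total w.re (-1) with h' | h'
  · have h1 : Real.exp w.re ≤ Real.exp (-1) := Real.exp_le_exp.2 h'
    have h3 : Real.exp (-1) ≤ 1 / 2 := by
      rw [Real.exp_neg, one_div]
      exact inv_anti₀ two_pos he
    have h2 := norm_sub_norm_le 1 (Complex.exp w)
    rw [norm_one, hre, norm_sub_rev] at h2
    linarith
  -- here `|Re w| ≤ 1`, which forces `Im w` to be close to an odd multiple of `π`
  set R : ℝ := (2 * n + 1) * π with hR
  have hRpi : π ≤ R := by
    have := Real.pi_pos
    have hn : (0 : ℝ) ≤ n := Nat.cast_nonneg n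
    nlinarith
  have hpi := Real.pi_gt_three
  have hsq : w.re ^ 2 + w.im ^ 2 = R ^ 2 := by
    rw [← hw, Complex.sq_norm, Complex.normSq_apply]; ring
  have hb : |w.im| ≤ R := hw ▸ Complex.abs_im_le_norm w
  have hb2 : R - 1 ≤ |w.im| := by
    have h1 : |w.im| ^ 2 = w.im ^ 2 := sq_abs _
    have h0 := abs_nonneg w.im
    by_contra hlt
    push Not at hlt
    nlinarith
  have hcos : Real.cos w.im ≤ 0 := by
    have h1 : Real.cos w.im = Real.cos (R - (R - |w.im|)) := by
      rw [sub_sub_cancel, Real.cos_abs]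
    have h2 : Real.cos (R - (R - |w.im|)) = -Real.cos (R - |w.im|) := by
      generalize R - |w.im| = δ
      rw [hR, show (2 * (n : ℝ) + 1) * π - δ = (π - δ) + n * (2 * π) by ring,
        Real.cos_add_nat_mul_two_pi, Real.cos_pi_sub]
    rw [h1, h2, neg_nonpos]
    exact Real.cos_nonneg_of_mem_Icc ⟨by linarith, by linarith⟩
  have h4 : (Complex.exp w - 1).re = Real.exp w.re * Real.cos w.im - 1 := by
    rw [Complex.sub_re, Complex.exp_re, Complex.one_re]
  have h5 := Complex.abs_re_le_norm (Complex.exp w - 1)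
  rw [h4] at h5
  have h6 : Real.exp w.re * Real.cos w.im ≤ 0 :=
    mul_nonpos_of_nonneg_of_nonpos (Real.exp_pos _).le hcos
  have h7 := neg_abs_le (Real.exp w.re * Real.cos w.im - 1)
  linarith

lemma differentiable_integral_exp (φ u : ℝ → ℂ) (hφ : Continuous φ) (hu : Continuous u)
    (a b : ℝ) : Differentiable ℂ fun z : ℂ => ∫ t in a..b, Complex.exp (z * u t) * φ t := by
  intro z₀
  have := intervalIntegral.hasDerivAt_integral_of_dominated_loc_of_deriv_le
    (μ := MeasureTheory.volume) (a := a) (b := b)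
    (F := fun z t => Complex.exp (z * u t) * φ t)
    (F' := fun z t => Complex.exp (z * u t) * u t * φ t) (x₀ := z₀)
    (bound := fun t => Real.exp ((‖z₀‖ + 1) * ‖u t‖) * ‖u t‖ * ‖φ t‖)
    (Metric.ball_mem_nhds z₀ one_pos)
    (Filter.Eventually.of_forall fun z => by
      apply Continuous.aestronglyMeasurable; fun_prop)
    (by apply Continuous.intervalIntegrable; fun_prop)
    (by apply Continuous.aestronglyMeasurable; fun_prop)
    (Filter.Eventually.of_forall fun t _ z hz => by
      rw [norm_mul, norm_mul]
      gcongr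
      rw [Complex.norm_exp]
      refine Real.exp_le_exp.2 ((Complex.re_le_norm _).trans ?_)
      rw [norm_mul]
      gcongr
      have h1 : ‖z - z₀‖ < 1 := by simpa [dist_eq_norm] using hz
      have h2 := norm_sub_norm_le z z₀
      linarith)
    (by apply Continuous.intervalIntegrable; fun_prop)
    (Filter.Eventually.of_forall fun t _ z _ => by
      have h : HasDerivAt (fun z : ℂ => z * u t) (u t) z := by
        simpa using (hasDerivAt_id z).mul_const (u t)
      exact h.cexp.mul_const (φ t))
  exact this.2.differentiableAt

open Real in
/-- A solution of `f (z + 1) - f z = z ^ n` of controlled growth, namely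
`n! / 2πi ∮ exp (z w) / ((exp w - 1) w ^ (n + 1)) dw` over the circle of radius `(2n+1)π`, which
runs between the poles of `1 / (exp w - 1)`. -/
lemma exists_difference_pow (n : ℕ) : ∃ f : ℂ → ℂ, Differentiable ℂ f ∧
    (∀ z, f (z + 1) - f z = z ^ n) ∧
    ∀ z, ‖f z‖ ≤ 2 * Real.exp ((2 * n + 1) * π * ‖z‖) := by
  set R : ℝ := (2 * n + 1) * π with hR
  have hR0 : 0 < R := by positivity
  have hwR : ∀ w ∈ Metric.sphere (0 : ℂ) R, ‖w‖ = R := fun w hw => by simpa using hw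
  have hne : ∀ w ∈ Metric.sphere (0 : ℂ) R, Complex.exp w - 1 ≠ 0 := fun w hw h => by
    have := norm_exp_sub_one_ge n w (hwR w hw)
    rw [h, norm_zero] at this
    norm_num at this
  have hw0 : ∀ w ∈ Metric.sphere (0 : ℂ) R, w ≠ 0 := fun w hw h => by
    have := hwR w hw
    rw [h, norm_zero] at this
    exact hR0.ne this
  let K : ℂ → ℂ := fun w => 1 / ((Complex.exp w - 1) * w ^ (n + 1))
  have hK : ContinuousOn K (Metric.sphere 0 R) := by
    refine continuousOn_const.div (by fun_prop) fun w hw => ?_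
    exact mul_ne_zero (hne w hw) (pow_ne_zero _ (hw0 w hw))
  let f : ℂ → ℂ := fun z => (n.factorial : ℂ) *
    ((2 * π * Complex.I : ℂ)⁻¹ • ∮ w in C(0, R), Complex.exp (z * w) * K w)
  have hcirc : ∀ z, CircleIntegrable (fun w => Complex.exp (z * w) * K w) 0 R := fun z =>
    ContinuousOn.circleIntegrable hR0.le ((by fun_prop : ContinuousOn _ _).mul hK)
  refine ⟨f, ?_, fun z => ?_, fun z => ?_⟩
  · have hcm : ∀ t, circleMap 0 R t ∈ Metric.sphere (0 : ℂ) R :=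
      circleMap_mem_sphere 0 hR0.le
    have h1 : Continuous fun t => deriv (circleMap 0 R) t * K (circleMap 0 R t) := by
      refine Continuous.mul ?_ (hK.comp_continuous (continuous_circleMap 0 R) hcm)
      rw [show deriv (circleMap 0 R) = fun t => circleMap 0 R t * Complex.I from
        funext fun t => deriv_circleMap 0 R t]
      exact (continuous_circleMap 0 R).mul continuous_const
    have h2 := differentiable_integral_exp _ _ h1 (continuous_circleMap 0 R) 0 (2 * π)
    have h3 : (fun z : ℂ => ∫ t in (0 : ℝ)..(2 * π), Complex.exp (z * circleMap 0 R t) *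
        (deriv (circleMap 0 R) t * K (circleMap 0 R t))) =
        fun z => ∮ w in C(0, R), Complex.exp (z * w) * K w := by
      funext z
      refine intervalIntegral.integral_congr fun t _ => ?_
      simp only [smul_eq_mul]
      ring
    rw [h3] at h2
    exact (h2.const_mul ((2 * π * Complex.I : ℂ)⁻¹)).const_mul (n.factorial : ℂ)
  · have h1 : f (z + 1) - f z = (n.factorial : ℂ) * ((2 * π * Complex.I : ℂ)⁻¹ •
        ∮ w in C(0, R), (1 / (w - 0) ^ (n + 1)) • Complex.exp (z * w)) := by
      simp only [f]
      rw [← mul_sub, ← smul_sub, ← circleIntegral.integral_sub (hcirc _) (hcirc _)]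
      congr 2
      refine circleIntegral.integral_congr hR0.le fun w hw => ?_
      have h2 := hne w hw
      have h3 := hw0 w hw
      simp only [K, sub_zero, smul_eq_mul]
      rw [add_mul, one_mul, Complex.exp_add]
      field_simp
    rw [h1, DifferentiableOn.circleIntegral_one_div_sub_center_pow_smul hR0 n
      (by fun_prop : Differentiable ℂ fun w => Complex.exp (z * w)).differentiableOn]
    rw [iteratedDeriv_cexp_const_mul]
    have h4 : (n.factorial : ℂ) ≠ 0 := mod_cast n.factorial_ne_zero
    have h5 := Complex.two_pi_I_ne_zero
    simp only [smul_eq_mul, mul_zero, Complex.exp_zero, mul_one]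
    field_simp
  · have h1 : ‖(2 * π * Complex.I : ℂ)⁻¹ • ∮ w in C(0, R), Complex.exp (z * w) * K w‖ ≤
        R * (Real.exp (R * ‖z‖) * (2 / R ^ (n + 1))) := by
      refine circleIntegral.norm_two_pi_i_inv_smul_integral_le_of_norm_le_const hR0.le ?_
      intro w hw
      rw [norm_mul]
      gcongr
      · rw [Complex.norm_exp]
        refine Real.exp_le_exp.2 ((Complex.re_le_norm _).trans ?_)
        rw [norm_mul, hwR w hw, mul_comm]
      · simp only [K]
        rw [norm_div, norm_one, norm_mul, norm_pow, hwR w hw, ← div_div]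
        gcongr
        have := norm_exp_sub_one_ge n w (hwR w hw)
        rw [div_le_iff₀ (by linarith)]
        linarith
    have h2 : (n.factorial : ℝ) ≤ R ^ n := by
      have h3 : (n.factorial : ℝ) ≤ (n : ℝ) ^ n := mod_cast n.factorial_le_pow
      refine h3.trans (pow_le_pow_left₀ (Nat.cast_nonneg n) ?_ n)
      have := Real.pi_gt_three
      have hn : (0 : ℝ) ≤ n := Nat.cast_nonneg n
      nlinarith
    simp only [f]
    rw [norm_mul, Complex.norm_natCast]
    calc (n.factorial : ℝ) * _ ≤ R ^ n * (R * (Real.exp (R * ‖z‖) * (2 / R ^ (n + 1)))) := by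
          gcongr
      _ = 2 * Real.exp (R * ‖z‖) := by
          field_simp
          ring

open Real in
/-- Guichard's theorem: `f (z + 1) - f z = g z` has an entire solution for every entire `g`. The
solution is the sum of the solutions for the Taylor monomials of `g`; their growth is controlled by
the bound of `exists_difference_pow`. -/
lemma guichard_one (g : ℂ → ℂ) (hg : Differentiable ℂ g) :
    ∃ f : ℂ → ℂ, Differentiable ℂ f ∧ ∀ z, f (z + 1) - f z = g z := by
  choose p hpd hps hpb using exists_difference_pow
  set c : ℕ → ℂ := fun n => (n.factorial : ℂ)⁻¹ * iteratedDeriv n g 0 with hc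
  have hsum : ∀ z, HasSum (fun n => c n * z ^ n) (g z) := fun z => by
    have := Complex.hasSum_taylorSeries_of_entire hg 0 z
    simp only [sub_zero, smul_eq_mul] at this
    refine this.congr_fun ?_
    intro n
    simp only [hc]; ring
  have hcs : ∀ ρ : ℝ, Summable fun n => ‖c n‖ * |ρ| ^ n := fun ρ => by
    have := (hsum (ρ : ℂ)).summable.norm
    simpa using this
  have hb : ∀ L : ℝ, ∃ u : ℕ → ℝ, Summable u ∧ ∀ n z, ‖z‖ ≤ L → ‖c n * p n z‖ ≤ u n := by
    intro L
    refine ⟨fun n => 2 * Real.exp (π * L) * (‖c n‖ * |Real.exp (2 * π * L)| ^ n),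
      (hcs _).mul_left _, fun n z hz => ?_⟩
    have h1 : ‖p n z‖ ≤ 2 * Real.exp ((2 * n + 1) * π * L) := by
      refine (hpb n z).trans ?_
      gcongr
    beta_reduce
    rw [norm_mul, abs_of_pos (Real.exp_pos _), ← Real.exp_nat_mul]
    calc ‖c n‖ * ‖p n z‖ ≤ ‖c n‖ * (2 * Real.exp ((2 * n + 1) * π * L)) := by gcongr
      _ = _ := by
        rw [show (2 * (n : ℝ) + 1) * π * L = π * L + n * (2 * π * L) by ring, Real.exp_add]
        ring
  have hs : ∀ z, Summable fun n => c n * p n z := fun z => by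
    obtain ⟨u, hu, hub⟩ := hb ‖z‖
    exact Summable.of_norm_bounded hu fun n => hub n z le_rfl
  refine ⟨fun z => ∑' n, c n * p n z, fun z => ?_, fun z => ?_⟩
  · obtain ⟨u, hu, hub⟩ := hb (‖z‖ + 1)
    have := Complex.differentiableOn_tsum_of_summable_norm (U := Metric.ball 0 (‖z‖ + 1)) hu
      (fun n => ((hpd n).const_mul (c n)).differentiableOn) Metric.isOpen_ball
      (fun n w hw => hub n w (by simpa using (mem_ball_zero_iff.1 hw).le))
    exact this.differentiableAt (Metric.isOpen_ball.mem_nhds (by simp))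
  · rw [← (hs _).tsum_sub (hs z), ← (hsum z).tsum_eq]
    refine tsum_congr fun n => ?_
    rw [← mul_sub, hps]

lemma guichard (x : ℂ) (hx : x ≠ 0) (g : ℂ → ℂ) (hg : Differentiable ℂ g) :
    ∃ f : ℂ → ℂ, Differentiable ℂ f ∧ ∀ z, f (z + x) - f z = g z := by
  obtain ⟨f, hf, hfg⟩ := guichard_one (fun z => g (x * z)) (by fun_prop)
  refine ⟨fun z => f (z / x), by fun_prop, fun z => ?_⟩
  have := hfg (z / x)
  rw [mul_div_cancel₀ _ hx] at this
  beta_reduce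
  rw [← this, add_div, div_self hx]

/-- A nowhere-vanishing entire function has an entire logarithm. -/
lemma exists_entire_log (f : ℂ → ℂ) (hf : Differentiable ℂ f) (h0 : ∀ z, f z ≠ 0) :
    ∃ g : ℂ → ℂ, Differentiable ℂ g ∧ ∀ z, f z = Complex.exp (g z) := by
  have hd : Differentiable ℂ fun z => deriv f z / f z := by
    have h1 : Differentiable ℂ (deriv f) := fun z =>
      ((hf.differentiableOn.deriv isOpen_univ) z trivial).differentiableAt Filter.univ_mem
    exact h1.div hf h0
  obtain ⟨g, hg⟩ := hd.isExactOn_univ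
  have hg' : ∀ z, HasDerivAt g (deriv f z / f z) z := fun z => hg z trivial
  have hconst : ∀ z, f z * Complex.exp (-g z) = f 0 * Complex.exp (-g 0) := by
    intro z
    have hD : ∀ z, HasDerivAt (fun z => f z * Complex.exp (-g z)) 0 z := fun z => by
      refine ((hf z).hasDerivAt.mul ((hg' z).neg.cexp)).congr_deriv ?_
      have := h0 z
      field_simp
      ring
    exact is_const_of_deriv_eq_zero (fun z => (hD z).differentiableAt) (fun z => (hD z).deriv) z 0
  refine ⟨fun z => g z + (Complex.log (f 0) - g 0),
    fun z => ((hg' z).differentiableAt).add_const _, fun z => ?_⟩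
  have h2 : f z = f z * Complex.exp (-g z) * Complex.exp (g z) := by
    rw [mul_assoc, ← Complex.exp_add, neg_add_cancel, Complex.exp_zero, mul_one]
  rw [h2, hconst, Complex.exp_add, Complex.exp_sub, Complex.exp_log (h0 0), Complex.exp_neg]
  field_simp

/-- Mean value over the period `[0, 1]`. -/
noncomputable def mean (h : ℂ → ℂ) : ℂ := ∫ s in (0 : ℝ)..1, h s

/-- The mean of a `1`-periodic entire function is translation invariant: with a primitive `H` it is
`H (w + 1) - H w`, whose derivative in `w` vanishes by periodicity. -/
lemma mean_translate (h : ℂ → ℂ) (hd : Differentiable ℂ h) (hp : ∀ z, h (z + 1) = h z) (x : ℂ) :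
    mean (fun z => h (z + x)) = mean h := by
  obtain ⟨H, hH⟩ := hd.isExactOn_univ
  have hH' : ∀ z, HasDerivAt H (h z) z := fun z => hH z trivial
  have key : ∀ w, mean (fun z => h (z + w)) = H (w + 1) - H w := fun w => by
    have h1 : ∀ s : ℝ, HasDerivAt (fun s : ℝ => H (s + w)) (h (s + w)) s := fun s =>
      ((hH' (s + w)).comp_add_const (s : ℂ) w).comp_ofReal
    rw [mean, intervalIntegral.integral_eq_sub_of_hasDerivAt (fun s _ => h1 s)]
    · simp [add_comm]
    · apply Continuous.intervalIntegrable
      have := hd.continuous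
      fun_prop
  have hD : ∀ w, HasDerivAt (fun w => H (w + 1) - H w) 0 w := fun w => by
    refine (((hH' (w + 1)).comp_add_const w 1).sub (hH' w)).congr_deriv ?_
    rw [hp, sub_self]
  have h2 := is_const_of_deriv_eq_zero (fun z => (hD z).differentiableAt)
    (fun z => (hD z).deriv) x 0
  have h3 := key 0
  simp only [add_zero] at h3
  rw [key, h3]
  simpa using h2

/-- The Fourier coefficients of a `1`-periodic function, computed on the real segment. -/
noncomputable def fcoef (h : ℂ → ℂ) (k : ℤ) : ℂ :=
  mean fun z => Complex.exp (-(2 * Real.pi * Complex.I * k * z)) * h z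

lemma exp_freq_add_one (k : ℤ) (z : ℂ) : Complex.exp (2 * Real.pi * Complex.I * k * (z + 1)) =
    Complex.exp (2 * Real.pi * Complex.I * k * z) := by
  rw [mul_add, Complex.exp_add, mul_one, show 2 * (Real.pi : ℂ) * Complex.I * k =
    k * (2 * Real.pi * Complex.I) by ring, Complex.exp_int_mul_two_pi_mul_I, mul_one]

/-- By periodicity, Fourier coefficients may be computed on any horizontal segment of length `1`. -/
lemma fcoef_eq (h : ℂ → ℂ) (hd : Differentiable ℂ h) (hp : ∀ z, h (z + 1) = h z) (k : ℤ) (x : ℂ) :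
    fcoef h k = mean fun z =>
      Complex.exp (-(2 * Real.pi * Complex.I * k * (z + x))) * h (z + x) := by
  refine (mean_translate (fun z => Complex.exp (-(2 * Real.pi * Complex.I * k * z)) * h z)
    (by fun_prop) (fun z => ?_) x).symm
  rw [hp, Complex.exp_neg, exp_freq_add_one, Complex.exp_neg]

/-- The Fourier coefficients of a periodic entire function decay faster than any exponential, as
shifting the segment of integration by `±iY` shows. -/
lemma fcoef_decay (h : ℂ → ℂ) (hd : Differentiable ℂ h) (hp : ∀ z, h (z + 1) = h z) (Y : ℝ) :
    ∃ C : ℝ, ∀ k : ℤ, ‖fcoef h k‖ ≤ C * Real.exp (-(2 * Real.pi * |(k : ℝ)| * Y)) := by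
  have hb : ∀ y : ℝ, ∃ C : ℝ, ∀ s ∈ Set.Icc (0 : ℝ) 1, ‖h (s + y * Complex.I)‖ ≤ C := fun y => by
    refine isCompact_Icc.exists_bound_of_continuousOn (f := fun s : ℝ => h (s + y * Complex.I)) ?_
    have := hd.continuous
    fun_prop
  have key : ∀ (y C : ℝ), (∀ s ∈ Set.Icc (0 : ℝ) 1, ‖h (s + y * Complex.I)‖ ≤ C) → ∀ k : ℤ,
      ‖fcoef h k‖ ≤ C * Real.exp (2 * Real.pi * k * y) := by
    intro y C hC k
    rw [fcoef_eq h hd hp k (y * Complex.I), mean]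
    refine (intervalIntegral.norm_integral_le_of_norm_le_const
      (C := C * Real.exp (2 * Real.pi * k * y)) fun s hs => ?_).trans (by simp)
    rw [Set.uIoc_of_le zero_le_one] at hs
    rw [norm_mul, mul_comm, Complex.norm_exp]
    have h1 : (-(2 * Real.pi * Complex.I * k * (s + y * Complex.I)) : ℂ).re =
        2 * Real.pi * k * y := by
      simp
    rw [h1]
    gcongr
    exact hC s ⟨hs.1.le, hs.2⟩
  obtain ⟨C₁, h₁⟩ := hb Y
  obtain ⟨C₂, h₂⟩ := hb (-Y)
  refine ⟨max C₁ C₂, fun k => ?_⟩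
  rcases le_total (0 : ℝ) k with hk | hk
  · refine (key (-Y) C₂ h₂ k).trans ?_
    rw [abs_of_nonneg hk, mul_neg]
    gcongr
    exact le_max_right _ _
  · refine (key Y C₁ h₁ k).trans ?_
    rw [abs_of_nonpos hk, show -(2 * Real.pi * -(k : ℝ) * Y) = 2 * Real.pi * k * Y by ring]
    gcongr
    exact le_max_left _ _

lemma summable_exp_neg_abs : Summable fun k : ℤ => Real.exp (-(|(k : ℝ)|)) := by
  have h : Summable fun n : ℕ => Real.exp (-(n : ℝ)) := Real.summable_exp_neg_nat
  refine Summable.of_nat_of_neg ?_ ?_ <;> simpa using h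

lemma fcoef_summable (h : ℂ → ℂ) (hd : Differentiable ℂ h) (hp : ∀ z, h (z + 1) = h z) (L : ℝ) :
    Summable fun k : ℤ => ‖fcoef h k‖ * Real.exp (2 * Real.pi * |(k : ℝ)| * L) := by
  obtain ⟨C, hC⟩ := fcoef_decay h hd hp (L + 1)
  have hC0 : 0 ≤ C := by
    have := (norm_nonneg _).trans (hC 0)
    simpa using this
  refine Summable.of_nonneg_of_le (fun k => by positivity) (fun k => ?_)
    (summable_exp_neg_abs.mul_left C)
  calc _ ≤ C * Real.exp (-(2 * Real.pi * |(k : ℝ)| * (L + 1))) *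
        Real.exp (2 * Real.pi * |(k : ℝ)| * L) := by gcongr; exact hC k
    _ = C * Real.exp (-(2 * Real.pi * |(k : ℝ)|)) := by
      rw [mul_assoc, ← Real.exp_add]; congr 2; ring
    _ ≤ _ := by
      gcongr
      have := Real.pi_gt_three
      have := abs_nonneg (k : ℝ)
      nlinarith

lemma norm_exp_le (k : ℤ) (z : ℂ) : ‖Complex.exp (2 * Real.pi * Complex.I * k * z)‖ ≤
    Real.exp (2 * Real.pi * |(k : ℝ)| * ‖z‖) := by
  rw [Complex.norm_exp]
  refine Real.exp_le_exp.2 ((Complex.re_le_norm _).trans (le_of_eq ?_))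
  simp [abs_of_pos Real.pi_pos]

/-- A periodic entire function is the sum of its Fourier series on all of `ℂ`. -/
lemma fourier_hasSum (h : ℂ → ℂ) (hd : Differentiable ℂ h) (hp : ∀ z, h (z + 1) = h z) (z : ℂ) :
    HasSum (fun k : ℤ => fcoef h k * Complex.exp (2 * Real.pi * Complex.I * k * z)) (h z) := by
  -- apply the theory on the circle to the restriction of `h` to the horizontal line through `z`
  have hper : Function.Periodic (fun s : ℝ => h (s + z)) (1 : ℝ) := fun s => by
    simp only [Complex.ofReal_add, Complex.ofReal_one]
    rw [add_right_comm, hp]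
  have hcont : Continuous fun s : ℝ => h (s + z) := by
    have := hd.continuous
    fun_prop
  let F : C(AddCircle (1 : ℝ), ℂ) := ⟨hper.lift, continuous_coinduced_dom.2 hcont⟩
  have hF : ∀ s : ℝ, F (s : AddCircle (1 : ℝ)) = h (s + z) := fun s => rfl
  have hcoef : ∀ k : ℤ, fourierCoeff F k =
      fcoef h k * Complex.exp (2 * Real.pi * Complex.I * k * z) := by
    intro k
    rw [fourierCoeff_eq_intervalIntegral _ k 0, fcoef_eq h hd hp k z, mean, zero_add, one_div,
      inv_one, one_smul, ← intervalIntegral.integral_mul_const]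
    refine intervalIntegral.integral_congr fun s _ => ?_
    rw [hF, fourier_coe_apply, smul_eq_mul, mul_right_comm (Complex.exp _) (h _) _,
      ← Complex.exp_add]
    congr 2
    push_cast
    ring
  have hs : Summable (fourierCoeff F) := by
    rw [show fourierCoeff F = _ from funext hcoef]
    refine Summable.of_norm_bounded (fcoef_summable h hd hp ‖z‖) fun k => ?_
    rw [norm_mul]
    gcongr
    exact norm_exp_le k z
  have := has_pointwise_sum_fourier_series_of_summable hs ((0 : ℝ) : AddCircle (1 : ℝ))
  rw [hF] at this
  simpa [hcoef] using this

/-- There are no small divisors: `exp (2πi k x) - 1` is bounded away from `0` for `k ≠ 0`, provided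
`x` is not real. -/
lemma norm_exp_sub_one_lower (x : ℂ) (k : ℤ) (hk : k ≠ 0) :
    1 - Real.exp (-(2 * Real.pi * |x.im|)) ≤
      ‖Complex.exp (2 * Real.pi * Complex.I * k * x) - 1‖ := by
  have hn : ‖Complex.exp (2 * Real.pi * Complex.I * k * x)‖ =
      Real.exp (-(2 * Real.pi * (k * x.im))) := by
    rw [Complex.norm_exp]
    congr 1
    simp
    ring
  have hk1 : (1 : ℝ) ≤ |(k : ℝ)| := mod_cast Int.one_le_abs hk
  have habs : |x.im| ≤ |k * x.im| := by
    rw [abs_mul]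
    nlinarith [abs_nonneg x.im]
  have hpi := Real.pi_pos
  rcases le_total 0 (k * x.im) with h | h
  · have h1 := norm_sub_norm_le 1 (Complex.exp (2 * Real.pi * Complex.I * k * x))
    rw [norm_one, norm_sub_rev, hn] at h1
    refine le_trans ?_ h1
    rw [abs_of_nonneg h] at habs
    gcongr
  · have h1 := norm_sub_norm_le (Complex.exp (2 * Real.pi * Complex.I * k * x)) 1
    rw [norm_one, hn] at h1
    refine le_trans ?_ h1
    rw [abs_of_nonpos h] at habs
    have h2 : Real.exp (2 * Real.pi * |x.im|) ≤ Real.exp (-(2 * Real.pi * (k * x.im))) := by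
      refine Real.exp_le_exp.2 ?_
      nlinarith
    have h3 := Real.add_one_le_exp (2 * Real.pi * |x.im|)
    have h4 := Real.add_one_le_exp (-(2 * Real.pi * |x.im|))
    linarith

/-- The difference equation `f (z + x) - f z = h z` is solvable among `1`-periodic entire functions
when `x` is not real and `h` has mean zero, by dividing the Fourier coefficients of `h` by
`exp (2πi k x) - 1`. -/
lemma periodic_difference (x : ℂ) (hx : x.im ≠ 0) (h : ℂ → ℂ) (hd : Differentiable ℂ h)
    (hp : ∀ z, h (z + 1) = h z) (h0 : mean h = 0) :
    ∃ f : ℂ → ℂ, Differentiable ℂ f ∧ (∀ z, f (z + 1) = f z) ∧ ∀ z, f (z + x) - f z = h z := by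
  set δ : ℝ := 1 - Real.exp (-(2 * Real.pi * |x.im|)) with hδ
  have hδ0 : 0 < δ := by
    have : 0 < 2 * Real.pi * |x.im| := by positivity
    rw [hδ, sub_pos, Real.exp_lt_one_iff]
    linarith
  let b : ℤ → ℂ := fun k => fcoef h k / (Complex.exp (2 * Real.pi * Complex.I * k * x) - 1)
  have h00 : fcoef h 0 = 0 := by simpa [fcoef] using h0
  have hb : ∀ k, ‖b k‖ ≤ δ⁻¹ * ‖fcoef h k‖ := fun k => by
    by_cases hk : k = 0
    · subst hk
      simp [b, h00]
    · simp only [b]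
      rw [norm_div, div_eq_inv_mul]
      gcongr
      exact norm_exp_sub_one_lower x k hk
  have hbs : ∀ L : ℝ, ∃ u : ℤ → ℝ, Summable u ∧ ∀ k z, ‖z‖ ≤ L →
      ‖b k * Complex.exp (2 * Real.pi * Complex.I * k * z)‖ ≤ u k := fun L => by
    refine ⟨_, (fcoef_summable h hd hp L).mul_left δ⁻¹, fun k z hz => ?_⟩
    rw [norm_mul, ← mul_assoc]
    gcongr
    · exact hb k
    · refine (norm_exp_le k z).trans ?_
      gcongr
  have hs : ∀ z, Summable fun k => b k * Complex.exp (2 * Real.pi * Complex.I * k * z) :=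
    fun z => by
      obtain ⟨u, hu, hub⟩ := hbs ‖z‖
      exact Summable.of_norm_bounded hu fun n => hub n z le_rfl
  refine ⟨fun z => ∑' k, b k * Complex.exp (2 * Real.pi * Complex.I * k * z), fun z => ?_,
    fun z => ?_, fun z => ?_⟩
  · obtain ⟨u, hu, hub⟩ := hbs (‖z‖ + 1)
    have := Complex.differentiableOn_tsum_of_summable_norm (U := Metric.ball 0 (‖z‖ + 1)) hu
      (fun k => (by fun_prop : Differentiable ℂ fun z : ℂ =>
        b k * Complex.exp (2 * Real.pi * Complex.I * k * z)).differentiableOn) Metric.isOpen_ball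
      (fun n w hw => hub n w (by simpa using (mem_ball_zero_iff.1 hw).le))
    exact this.differentiableAt (Metric.isOpen_ball.mem_nhds (by simp))
  · simp only [exp_freq_add_one]
  · rw [← (hs _).tsum_sub (hs z), ← (fourier_hasSum h hd hp z).tsum_eq]
    refine tsum_congr fun k => ?_
    by_cases hk : k = 0
    · subst hk
      simp [b, h00]
    · have hne : Complex.exp (2 * Real.pi * Complex.I * k * x) - 1 ≠ 0 := by
        have := norm_exp_sub_one_lower x k hk
        intro h'
        rw [h', norm_zero] at this
        linarith
      simp only [b]
      rw [mul_add, Complex.exp_add]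
      field_simp

end Analysis

/-! ### Periodic nowhere-vanishing functions and their invariant -/

section Assembly

/-- The additive group of `1`-periodic entire functions. -/
def perFun : AddSubgroup (ℂ → ℂ) where
  carrier := {h | Differentiable ℂ h ∧ ∀ z, h (z + 1) = h z}
  zero_mem' := ⟨differentiable_const 0, fun _ => rfl⟩
  add_mem' {a b} ha hb := ⟨ha.1.add hb.1, fun z => congrArg₂ (· + ·) (ha.2 z) (hb.2 z)⟩
  neg_mem' {a} ha := ⟨ha.1.neg, fun z => congrArg Neg.neg (ha.2 z)⟩

lemma perFun_add (h h' : perFun) (z : ℂ) : (h + h').1 z = h.1 z + h'.1 z := rfl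

lemma mean_add (h h' : perFun) : mean (h + h').1 = mean h.1 + mean h'.1 := by
  have hc := h.2.1.continuous
  have hc' := h'.2.1.continuous
  refine intervalIntegral.integral_add (f := fun s : ℝ => h.1 s) (g := fun s : ℝ => h'.1 s) ?_ ?_
  all_goals
    apply Continuous.intervalIntegrable
    fun_prop

/-- The mean value as an additive map. -/
noncomputable def meanHom : perFun →+ ℂ :=
  AddMonoidHom.mk' (fun h => mean h.1) mean_add

/-- The constant functions. -/
def constHom : ℂ →+ perFun :=
  AddMonoidHom.mk' (fun c => ⟨fun _ => c, differentiable_const c, fun _ => rfl⟩) fun _ _ => rfl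

lemma meanHom_const (c : ℂ) : meanHom (constHom c) = c := by
  change ∫ _ in (0 : ℝ)..1, c = c
  simp

/-- Translation of a periodic entire function. -/
def perShift (y : ℂ) (h : perFun) : perFun :=
  ⟨fun z => h.1 (z + y), by have := h.2.1; fun_prop, fun z => by
    beta_reduce
    rw [add_right_comm, h.2.2]⟩

lemma meanHom_shift (y : ℂ) (h : perFun) : meanHom (perShift y h) = meanHom h :=
  mean_translate h.1 h.2.1 h.2.2 y

/-- An entire function with values in `2πiℤ` is constant. -/
lemma exists_int_of_exp_eq_one (g : ℂ → ℂ) (hg : Differentiable ℂ g)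
    (h : ∀ z, Complex.exp (g z) = 1) : ∃ m : ℤ, ∀ z, g z = m * (2 * Real.pi * Complex.I) := by
  have hD : ∀ z, deriv g z = 0 := fun z => by
    have h1 := (hg z).hasDerivAt.cexp
    rw [h z, one_mul, show (fun z => Complex.exp (g z)) = fun _ => 1 from funext h] at h1
    exact h1.unique (hasDerivAt_const z 1)
  obtain ⟨m, hm⟩ := Complex.exp_eq_one_iff.1 (h 0)
  exact ⟨m, fun z => by rw [is_const_of_deriv_eq_zero hg hD z 0, hm]⟩

variable {n : ℕ} (ι : (Fin (n + 2) → ℤ) →+ ℂ)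

/-- The value at `z` of a nowhere-vanishing function invariant under the first period. -/
def fval (a : fixedSub (Rep.of (entireRep (n + 2) ι)) (gen 0)) (z : ℂ) : ℂ :=
  (Additive.toMul (show Additive EntireUnits from a.1)).1 z

variable {ι}

lemma fval_ext {a b : fixedSub (Rep.of (entireRep (n + 2) ι)) (gen 0)}
    (h : ∀ z, fval ι a z = fval ι b z) : a = b :=
  Subtype.ext (Subtype.ext (funext h))

lemma fval_zero (z : ℂ) : fval ι 0 z = 1 := rfl

lemma fval_sub (a b : fixedSub (Rep.of (entireRep (n + 2) ι)) (gen 0)) (z : ℂ) :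
    fval ι (a - b) z = fval ι a z / fval ι b z := by
  rw [sub_eq_add_neg, div_eq_mul_inv]
  rfl

lemma fval_act (j : Fin (n + 2)) (a : fixedSub (Rep.of (entireRep (n + 2) ι)) (gen 0)) (z : ℂ) :
    fval ι (fixedAct _ (gen 0) (gen j) a) z = fval ι a (z + ι (Pi.single j 1)) := rfl

lemma fval_add_period (a : fixedSub (Rep.of (entireRep (n + 2) ι)) (gen 0)) (z : ℂ) :
    fval ι a (z + ι (Pi.single 0 1)) = fval ι a z :=
  congrFun (congrArg (fun m : Additive EntireUnits => m.toMul.1) a.2) z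

/-- Every nowhere-vanishing entire function is of the form `f (z + x₀) / f z`. -/
lemma entire_sub_one_surjective (hx : ι (Pi.single 0 1) ≠ 0)
    (m : Rep.of (entireRep (n + 2) ι)) :
    ∃ m' : Rep.of (entireRep (n + 2) ι), (Rep.of (entireRep (n + 2) ι)).ρ (gen 0) m' - m' = m := by
  let u : EntireUnits := Additive.toMul (show Additive EntireUnits from m)
  obtain ⟨g, hg, hgu⟩ := exists_entire_log u.1 u.2.1 u.2.2
  obtain ⟨f, hf, hfg⟩ := guichard _ hx g hg
  let v : EntireUnits := ⟨fun z => Complex.exp (f z), hf.cexp, fun z => Complex.exp_ne_zero _⟩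
  refine ⟨(show Additive EntireUnits from Additive.ofMul v), ?_⟩
  refine sub_eq_iff_eq_add.2 (Subtype.ext (funext fun z => ?_))
  change Complex.exp (f (z + ι (Pi.single 0 1))) = u.1 z * Complex.exp (f z)
  rw [hgu, ← Complex.exp_add, ← hfg]
  congr 1
  ring

/-- The parametrization `(h, k) ↦ exp (h (z / x₀) + 2πi k z / x₀)` of the nowhere-vanishing entire
functions with period `x₀`. -/
noncomputable def expHom (hx : ι (Pi.single 0 1) ≠ 0) :
    perFun × ℤ →+ fixedSub (Rep.of (entireRep (n + 2) ι)) (gen 0) :=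
  AddMonoidHom.mk' (fun p => ⟨(show Additive EntireUnits from Additive.ofMul
      ⟨fun z => Complex.exp (p.1.1 (z / ι (Pi.single 0 1)) +
        2 * Real.pi * Complex.I * p.2 * (z / ι (Pi.single 0 1))),
      by have := p.1.2.1; fun_prop, fun z => Complex.exp_ne_zero _⟩), by
      refine Subtype.ext (funext fun z => ?_)
      change Complex.exp (p.1.1 ((z + ι (Pi.single 0 1)) / ι (Pi.single 0 1)) +
        2 * Real.pi * Complex.I * p.2 * ((z + ι (Pi.single 0 1)) / ι (Pi.single 0 1))) = _
      rw [add_div, div_self hx, p.1.2.2, Complex.exp_add, exp_freq_add_one, ← Complex.exp_add]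
      rfl⟩)
    fun p q => by
      refine Subtype.ext (Subtype.ext (funext fun z => ?_))
      change Complex.exp ((p.1 + q.1).1 (z / ι (Pi.single 0 1)) +
        2 * Real.pi * Complex.I * ((p.2 + q.2 : ℤ) : ℂ) * (z / ι (Pi.single 0 1))) =
        Complex.exp _ * Complex.exp _
      rw [← Complex.exp_add, perFun_add]
      congr 1
      push_cast
      ring

lemma fval_expHom (hx : ι (Pi.single 0 1) ≠ 0) (p : perFun × ℤ) (z : ℂ) :
    fval ι (expHom hx p) z = Complex.exp (p.1.1 (z / ι (Pi.single 0 1)) +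
      2 * Real.pi * Complex.I * p.2 * (z / ι (Pi.single 0 1))) := rfl

/-- Every nowhere-vanishing entire function with period `x₀` is parametrized: write it as `exp g`;
then `g (z + x₀) - g z = 2πi k` for an integer `k`, and `g - 2πi k z / x₀` is periodic. -/
lemma expHom_surjective (hx : ι (Pi.single 0 1) ≠ 0) : Function.Surjective (expHom hx) := by
  intro a
  set x := ι (Pi.single 0 1) with hxd
  let u : EntireUnits := Additive.toMul (show Additive EntireUnits from a.1)
  obtain ⟨g, hg, hgu⟩ := exists_entire_log u.1 u.2.1 u.2.2
  have hga : ∀ z, fval ι a z = Complex.exp (g z) := hgu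
  -- the logarithm of a periodic function is periodic up to a constant in `2πiℤ`
  obtain ⟨k, hk⟩ := exists_int_of_exp_eq_one (fun z => g (z + x) - g z) (by fun_prop) fun z => by
    rw [Complex.exp_sub, ← hga, ← hga, fval_add_period]
    exact div_self (u.2.2 z)
  refine ⟨(⟨fun z => g (x * z) - 2 * Real.pi * Complex.I * k * z, by fun_prop, fun z => ?_⟩, k),
    fval_ext fun z => ?_⟩
  · have := hk (x * z)
    beta_reduce at this ⊢
    rw [mul_add, mul_one]
    linear_combination this
  · rw [fval_expHom, hga]
    congr 1
    change g (x * (z / x)) - 2 * Real.pi * Complex.I * k * (z / x) +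
      2 * Real.pi * Complex.I * k * (z / x) = g z
    rw [mul_div_cancel₀ z hx]
    ring

/-- Translation by the `j`-th period in the coordinates of `expHom`. -/
lemma expHom_sub (hx : ι (Pi.single 0 1) ≠ 0) (j : Fin (n + 2)) (p : perFun × ℤ) :
    fixedAct _ (gen 0) (gen j) (expHom hx p) - expHom hx p =
      expHom hx (perShift (ι (Pi.single j 1) / ι (Pi.single 0 1)) p.1 - p.1 +
        constHom (2 * Real.pi * Complex.I * p.2 * (ι (Pi.single j 1) / ι (Pi.single 0 1))), 0) := by
  refine fval_ext fun z => ?_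
  rw [fval_sub, fval_act, fval_expHom, fval_expHom, fval_expHom, ← Complex.exp_sub]
  congr 1
  change _ = p.1.1 (z / _ + _) - p.1.1 (z / _) + _ + _
  rw [add_div]
  change _ = _ + 2 * Real.pi * Complex.I * p.2 * (ι (Pi.single j 1) / ι (Pi.single 0 1)) + _
  push_cast
  ring

/-- The invariant `(h, k) ↦ (x₀ / 2πi · mean h, k)` with values in `ℂ / ι(ℤ^r) × ℤ`. -/
noncomputable def invHom (ι : (Fin (n + 2) → ℤ) →+ ℂ) : perFun × ℤ →+ (ℂ ⧸ ι.range) × ℤ :=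
  ((QuotientAddGroup.mk' ι.range).comp
    ((AddMonoidHom.mulLeft (ι (Pi.single 0 1) / (2 * Real.pi * Complex.I))).comp meanHom)).prodMap
    (AddMonoidHom.id ℤ)

lemma invHom_eq_zero (p : perFun × ℤ) : invHom ι p = 0 ↔
    (∃ v, ι v = ι (Pi.single 0 1) / (2 * Real.pi * Complex.I) * meanHom p.1) ∧ p.2 = 0 := by
  rw [Prod.ext_iff]
  exact and_congr (QuotientAddGroup.eq_zero_iff _) Iff.rfl

lemma invHom_surjective (hx : ι (Pi.single 0 1) ≠ 0) : Function.Surjective (invHom ι) := by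
  rintro ⟨c, k⟩
  obtain ⟨c, rfl⟩ := QuotientAddGroup.mk'_surjective _ c
  refine ⟨(constHom (2 * Real.pi * Complex.I / ι (Pi.single 0 1) * c), k), Prod.ext ?_ rfl⟩
  change QuotientAddGroup.mk' ι.range (ι (Pi.single 0 1) / (2 * Real.pi * Complex.I) *
    meanHom (constHom _)) = _
  have := Complex.two_pi_I_ne_zero
  rw [meanHom_const]
  congr 1
  field_simp

/-- `exp (h + 2πi k z) = 1` forces `k = 0` and `h ∈ 2πiℤ`. -/
lemma invHom_of_expHom_eq_zero (hx : ι (Pi.single 0 1) ≠ 0) (p : perFun × ℤ)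
    (hp : expHom hx p = 0) : invHom ι p = 0 := by
  have h2 := Complex.two_pi_I_ne_zero
  obtain ⟨m, hm⟩ := exists_int_of_exp_eq_one
    (fun z => p.1.1 z + 2 * Real.pi * Complex.I * p.2 * z)
    (by have := p.1.2.1; fun_prop) fun z => by
      have := fval_expHom hx p (ι (Pi.single 0 1) * z)
      rw [hp, fval_zero, mul_div_cancel_left₀ z hx] at this
      exact this.symm
  have hk : p.2 = 0 := by
    have h0 := hm 0
    have h1 := hm (0 + 1)
    beta_reduce at h0 h1
    rw [p.1.2.2] at h1
    have h3 : 2 * Real.pi * Complex.I * (p.2 : ℂ) = 0 := by linear_combination h1 - h0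
    exact_mod_cast (mul_eq_zero.1 h3).resolve_left h2
  have hc : p.1 = constHom (m * (2 * Real.pi * Complex.I)) := Subtype.ext <| funext fun z => by
    have := hm z
    rw [hk, Int.cast_zero, mul_zero, zero_mul, add_zero] at this
    exact this
  rw [invHom_eq_zero]
  refine ⟨⟨m • Pi.single 0 1, ?_⟩, hk⟩
  rw [hc, meanHom_const, map_zsmul, zsmul_eq_mul]
  field_simp

/-- The invariant vanishes on the coboundaries computed in `expHom_sub`: translation preserves the
mean, and the constant contributes the class of `k x_j`. -/
lemma invHom_coboundary (hx : ι (Pi.single 0 1) ≠ 0) (j : Fin (n + 2)) (p : perFun × ℤ) :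
    invHom ι (perShift (ι (Pi.single j 1) / ι (Pi.single 0 1)) p.1 - p.1 +
        constHom (2 * Real.pi * Complex.I * p.2 * (ι (Pi.single j 1) / ι (Pi.single 0 1))), 0)
      = 0 := by
  have h2 := Complex.two_pi_I_ne_zero
  rw [invHom_eq_zero]
  refine ⟨⟨p.2 • Pi.single j 1, ?_⟩, rfl⟩
  rw [map_add, map_sub, meanHom_shift, meanHom_const, sub_self, zero_add, map_zsmul, zsmul_eq_mul]
  field_simp

lemma coboundary_mem {a : fixedSub (Rep.of (entireRep (n + 2) ι)) (gen 0)} (j : Fin (n + 2))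
    (hj : j ≠ 0) : fixedAct _ (gen 0) (gen j) a - a ∈
      augSub (fun j => fixedAct (Rep.of (entireRep (n + 2) ι)) (gen 0) (gen j)) (n + 1) := by
  have hj' : 1 ≤ j.1 ∧ j.1 ≤ n + 1 :=
    ⟨Nat.one_le_iff_ne_zero.2 fun h => hj (Fin.ext h), Nat.lt_succ_iff.1 j.2⟩
  have hle := le_iSup₂ (f := fun (j : Fin (n + 2)) (_ : 1 ≤ j.1 ∧ j.1 ≤ n + 1) =>
    (fixedAct (Rep.of (entireRep (n + 2) ι)) (gen 0) (gen j) - AddMonoidHom.id _).range) j hj'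
  exact hle ⟨a, rfl⟩

/-- The constants `2πi m x_j / x₀` exponentiate to coboundaries. -/
lemma expHom_const_mem (hx : ι (Pi.single 0 1) ≠ 0) (j : Fin (n + 2)) (m : ℤ) :
    expHom hx (constHom (2 * Real.pi * Complex.I * m * (ι (Pi.single j 1) / ι (Pi.single 0 1))), 0)
      ∈ augSub (fun j => fixedAct (Rep.of (entireRep (n + 2) ι)) (gen 0) (gen j)) (n + 1) := by
  by_cases hj : j = 0
  · subst hj
    have : expHom hx (constHom
        (2 * Real.pi * Complex.I * m * (ι (Pi.single 0 1) / ι (Pi.single 0 1))), 0) = 0 := by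
      refine fval_ext fun z => ?_
      rw [fval_expHom, fval_zero]
      change Complex.exp (2 * Real.pi * Complex.I * m * (ι (Pi.single 0 1) / ι (Pi.single 0 1)) +
        2 * Real.pi * Complex.I * (0 : ℤ) * _) = 1
      rw [div_self hx, Complex.exp_eq_one_iff]
      exact ⟨m, by push_cast; ring⟩
    rw [this]
    exact zero_mem _
  · have h := coboundary_mem (a := expHom hx (0, m)) j hj
    rw [expHom_sub] at h
    convert h using 3
    change _ = 0 - 0 + _
    rw [sub_self, zero_add]

/-- The coboundaries are exactly the classes with trivial invariant. -/
lemma expHom_mem_iff (hx : ι (Pi.single 0 1) ≠ 0)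
    (him : ∃ j, (ι (Pi.single j 1) / ι (Pi.single 0 1)).im ≠ 0) (p : perFun × ℤ) :
    expHom hx p ∈ augSub (fun j => fixedAct (Rep.of (entireRep (n + 2) ι)) (gen 0) (gen j)) (n + 1)
      ↔ invHom ι p = 0 := by
  have h2 := Complex.two_pi_I_ne_zero
  constructor
  · intro hp
    have hle : augSub (fun j => fixedAct (Rep.of (entireRep (n + 2) ι)) (gen 0) (gen j)) (n + 1)
        ≤ (invHom ι).ker.map (expHom hx) := by
      refine iSup₂_le fun j _ => ?_
      rintro _ ⟨a, rfl⟩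
      obtain ⟨q, rfl⟩ := expHom_surjective hx a
      exact ⟨_, invHom_coboundary hx j q, (expHom_sub hx j q).symm⟩
    obtain ⟨q, hq, hqp⟩ := hle hp
    have h3 := invHom_of_expHom_eq_zero hx (p - q) (by rw [map_sub, hqp, sub_self])
    rw [map_sub, sub_eq_zero] at h3
    rw [h3]
    exact hq
  · intro hp
    rw [invHom_eq_zero] at hp
    obtain ⟨⟨v, hv⟩, hk⟩ := hp
    obtain ⟨h, k⟩ := p
    obtain rfl : k = 0 := hk
    obtain ⟨j, hj⟩ := him
    have hj0 : j ≠ 0 := by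
      rintro rfl
      rw [div_self hx, Complex.one_im] at hj
      exact hj rfl
    have hmean : meanHom h = ∑ i, 2 * Real.pi * Complex.I * v i *
        (ι (Pi.single i 1) / ι (Pi.single 0 1)) := by
      have hsum : ι v = ∑ i, v i * ι (Pi.single i 1) := by
        conv_lhs => rw [pi_eq_sum_univ' v]
        rw [map_sum]
        refine Finset.sum_congr rfl fun i _ => ?_
        rw [← zsmul_eq_mul, ← map_zsmul]
      have h3 : meanHom h = 2 * Real.pi * Complex.I / ι (Pi.single 0 1) * ι v := by
        rw [hv]
        field_simp
      rw [h3, hsum, Finset.mul_sum]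
      refine Finset.sum_congr rfl fun i _ => ?_
      ring
    -- the part of mean zero is a coboundary for the non-real direction `x_j / x₀`
    set h₀ : perFun := h - constHom (meanHom h) with hh₀
    have hm0 : mean h₀.1 = 0 := by
      change meanHom h₀ = 0
      rw [hh₀, map_sub, meanHom_const, sub_self]
    obtain ⟨f, hf, hfp, hfd⟩ := periodic_difference _ hj h₀.1 h₀.2.1 h₀.2.2 hm0
    have hA := coboundary_mem (a := expHom hx (⟨f, hf, hfp⟩, 0)) j hj0
    rw [expHom_sub] at hA
    have hA' : expHom hx (h₀, 0) ∈
        augSub (fun j => fixedAct (Rep.of (entireRep (n + 2) ι)) (gen 0) (gen j)) (n + 1) := by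
      convert hA using 3
      refine Subtype.ext (funext fun z => ?_)
      rw [perFun_add]
      change _ = f (z + _) - f z + 2 * Real.pi * Complex.I * (0 : ℤ) * _
      rw [hfd, Int.cast_zero, mul_zero, zero_mul, add_zero]
    have hB := sum_mem (t := Finset.univ) fun i _ => expHom_const_mem hx i (v i)
    rw [← map_sum] at hB
    convert add_mem hA' hB using 1
    rw [← map_add]
    congr 1
    refine Prod.ext ?_ ?_
    · rw [Prod.fst_add, Prod.fst_sum, ← map_sum, ← hmean, sub_add_cancel]
    · rw [Prod.snd_add, Prod.snd_sum]
      simp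

end Assembly

/-- If the values `x_j = ι(e_j)` are ℚ-linearly independent and span `ℂ` over `ℝ`, then
`H^{r−1}(ℤ^r, O(ℂ)^×) ≅ (ℂ/ι(ℤ^r)) × ℤ` as abelian groups. -/
theorem entireCohomology_top_degree (r : ℕ) (hr : 1 ≤ r) (ι : (Fin r → ℤ) →+ ℂ)
    (hind : LinearIndependent ℚ fun j : Fin r => ι (Pi.single j 1))
    (hspan : Submodule.span ℝ (Set.range fun j : Fin r => ι (Pi.single j 1)) = ⊤) :
    Nonempty ((entireCohomology r ι (r - 1)) ≃+ (ℂ ⧸ ι.range) × ℤ) := by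
  obtain ⟨n, rfl⟩ : ∃ n, r = n + 2 := by
    -- a single vector does not span the real plane `ℂ`
    refine ⟨r - 2, ?_⟩
    have h := finrank_range_le_card (R := ℝ) fun j : Fin r => ι (Pi.single j 1)
    rw [Set.finrank, hspan, finrank_top, Complex.finrank_real_complex, Fintype.card_fin] at h
    lia
  have hx : ι (Pi.single 0 1) ≠ 0 := hind.ne_zero 0
  have him : ∃ j, (ι (Pi.single j 1) / ι (Pi.single 0 1)).im ≠ 0 := by
    -- otherwise all periods would lie on the real line through `x₀`
    by_contra! hre
    have hle : Submodule.span ℝ (Set.range fun j => ι (Pi.single j 1)) ≤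
        Submodule.span ℝ {ι (Pi.single 0 1)} := by
      rw [Submodule.span_le]
      rintro _ ⟨j, rfl⟩
      refine Submodule.mem_span_singleton.2 ⟨(ι (Pi.single j 1) / ι (Pi.single 0 1)).re, ?_⟩
      have : ι (Pi.single j 1) / ι (Pi.single 0 1) =
          ((ι (Pi.single j 1) / ι (Pi.single 0 1)).re : ℂ) := Complex.ext rfl (hre j)
      rw [Complex.real_smul, ← this, div_mul_cancel₀ _ hx]
    have h := finrank_span_singleton (K := ℝ) hx
    rw [hspan, top_le_iff] at hle
    rw [hle, finrank_top, Complex.finrank_real_complex] at h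
    lia
  obtain ⟨Φ, hΦ, hk⟩ := top_cohomology_presentation (Rep.of (entireRep (n + 2) ι))
    (entire_sub_one_surjective hx)
  refine nonempty_addEquiv_of_surjective (Φ.comp (expHom hx)) (invHom ι)
    (hΦ.comp (expHom_surjective hx)) (invHom_surjective hx) fun p => ?_
  change Φ (expHom hx p) = 0 ↔ _
  rw [hk, expHom_mem_iff hx him]
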